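/- arXiv:0710.2495 — 3 statements merged into one kernel-verified Lean document; each statement's English description precedes it below -/
import Mathlib

section
/- Let T1, T2 : A → B(H) be completely positive maps and let α ≥ 0 be such that for every n ≥ 1 and every x in M_n(A), ‖((T1 − T2) applied entrywise)(x)‖ ≤ α · ‖x‖ (i.e., the cb-norm of T1 − T2 is at most α). Then there exists a common dilation (π, V1, K), (π, V2, K) of (T1, T2) with ‖V1 − V2‖ ≤ √α. -/
noncomputable section

universe u v

/-- A linear map between star algebras is *completely positive* if, for every `n`, its
entrywise application to `n × n` matrices maps positive elements (i.e. elements of the form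
`star y * y`) to positive elements. -/
def IsCPMap {A B : Type*} [NonUnitalSemiring A] [StarRing A]
    [NonUnitalSemiring B] [StarRing B] (T : A → B) : Prop :=
  ∀ (n : ℕ) (x : Matrix (Fin n) (Fin n) A),
    (∃ y : Matrix (Fin n) (Fin n) A, x = star y * y) →
      ∃ z : Matrix (Fin n) (Fin n) B, x.map T = star z * z

/-- `ν` is a C*-norm on the star algebra `R`. -/
structure IsCStarNorm {R : Type*} [NonUnitalRing R] [StarRing R] [Module ℂ R]
    (ν : R → ℝ) : Prop where
  add_le : ∀ x y : R, ν (x + y) ≤ ν x + ν y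
  smul_eq : ∀ (c : ℂ) (x : R), ν (c • x) = ‖c‖ * ν x
  eq_zero_iff : ∀ x : R, ν x = 0 ↔ x = 0
  mul_le : ∀ x y : R, ν (x * y) ≤ ν x * ν y
  star_mul_self : ∀ x : R, ν (star x * x) = ν x * ν x

/-- `(π, V, K)` is a Stinespring dilation of `T : A → B(H)`:
`T a = V⋆ ∘ π a ∘ V` for all `a`. -/
def IsStinespring {A : Type*} [CStarAlgebra A]
    {H : Type*} [NormedAddCommGroup H] [InnerProductSpace ℂ H] [CompleteSpace H]
    {K : Type*} [NormedAddCommGroup K] [InnerProductSpace ℂ K] [CompleteSpace K]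
    (T : A →ₗ[ℂ] (H →L[ℂ] H)) (π : A →⋆ₙₐ[ℂ] (K →L[ℂ] K)) (V : H →L[ℂ] K) : Prop :=
  ∀ a : A, T a = (ContinuousLinearMap.adjoint V).comp ((π a).comp V)

/-
Write `E` for the finitely supported functions `H → A`. A common dilation amounts to an invariant
positive form on `E × E` whose diagonal blocks are the Stinespring forms of `T₁` and `T₂`; its
off-diagonal block is a linear functional `X`, with `X (ξ, η, a) = ⟪V₁ ξ, π a (V₂ η)⟫`. Such an `X`
is needed with `2 re X (ξ, ξ, 1) ≥ ⟪ξ, (T₁ 1 + T₂ 1 - α) ξ⟫`, which says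
`‖V₁ ξ - V₂ ξ‖ ^ 2 ≤ α * ‖ξ‖ ^ 2`.

These are linear constraints on `X`, so by a Hahn-Banach argument it is enough that every conic
relation between them is consistent. Restricting to finitely many vectors and rescaling them brings
such a relation into the form `∑ star (u k) * v k = 1` in a matrix algebra over `A`. Then there is a
self-adjoint contraction `h` with `1 + h ≤ ∑ star (u k) * u k` and `1 - h ≤ ∑ star (v k) * v k`, and
complete positivity gives
`T₁ (∑ star (u k) * u k) + T₂ (∑ star (v k) * v k) ≥ T₁ 1 + T₂ 1 + (T₁ - T₂) h`, entrywise, where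
`(T₁ - T₂) h ≥ -α` by the bound on `T₁ - T₂`.
-/
open UniformSpace
open scoped ComplexOrder InnerProductSpace NNReal

section UniqueCStarNorm

namespace IsCStarNorm

section Ring

variable {R : Type*} [NonUnitalRing R] [StarRing R] [Module ℂ R] {ν : R → ℝ}

lemma map_neg (hν : IsCStarNorm ν) (x : R) : ν (-x) = ν x := by
  simpa using hν.smul_eq (-1) x

lemma map_nonneg (hν : IsCStarNorm ν) (x : R) : 0 ≤ ν x := by
  have h := hν.add_le x (-x)
  rw [add_neg_cancel, (hν.eq_zero_iff 0).2 rfl, hν.map_neg] at h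
  linarith

end Ring

variable {R : Type*} [CStarAlgebra R] {ν : R → ℝ}

lemma le_one_of_star_mul_self_eq_one (hν : IsCStarNorm ν) {u : R} (hu : star u * u = 1) :
    ν u ≤ 1 := by
  have h_one : ν 1 = ν 1 * ν 1 := by simpa using hν.star_mul_self 1
  have hu_sq : ν 1 = ν u * ν u := by rw [← hν.star_mul_self u, hu]
  have h_one_le : ν 1 ≤ 1 := by nlinarith [hν.map_nonneg (1 : R)]
  nlinarith [hν.map_nonneg u]

lemma le_one_of_isSelfAdjoint (hν : IsCStarNorm ν) {a : R} (ha : IsSelfAdjoint a)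
    (ha_norm : ‖a‖ ≤ 1) : ν a ≤ 1 := by
  let _ := CStarAlgebra.spectralOrder R
  have _ := CStarAlgebra.spectralOrderedRing R
  set u : unitary R := selfAdjoint.unitarySelfAddISMul ⟨a, ha⟩ ha_norm
  have ha_eq : a = (2⁻¹ : ℂ) • ((u : R) + star (u : R)) := by
    have h := congrArg Subtype.val (selfAdjoint.realPart_unitarySelfAddISMul ⟨a, ha⟩ ha_norm)
    rw [realPart_apply_coe, ← Complex.coe_smul] at h
    simpa using h.symm
  have hu : ν (u : R) ≤ 1 := hν.le_one_of_star_mul_self_eq_one (by simp)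
  have hu_star : ν (star (u : R)) ≤ 1 := hν.le_one_of_star_mul_self_eq_one (by simp)
  have h_add := hν.add_le (u : R) (star (u : R))
  rw [ha_eq, hν.smul_eq]
  norm_num
  linarith

lemma le_norm_of_isSelfAdjoint (hν : IsCStarNorm ν) {a : R} (ha : IsSelfAdjoint a) :
    ν a ≤ ‖a‖ := by
  rcases eq_or_ne a 0 with rfl | ha0
  · simp [(hν.eq_zero_iff 0).2 rfl]
  have h_pos : 0 < ‖a‖ := norm_pos_iff.2 ha0
  have h_unit : ν (((‖a‖⁻¹ : ℝ) : ℂ) • a) ≤ 1 :=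
    hν.le_one_of_isSelfAdjoint (by simp [isSelfAdjoint_iff, ha.star_eq])
      (by simp [norm_smul, h_pos.ne'])
  rw [hν.smul_eq, Complex.norm_real, norm_inv, norm_norm] at h_unit
  simpa [inv_mul_le_iff₀ h_pos] using h_unit

lemma le_norm (hν : IsCStarNorm ν) (x : R) : ν x ≤ ‖x‖ := by
  refine (mul_self_le_mul_self_iff (hν.map_nonneg x) (norm_nonneg x)).2 ?_
  rw [← hν.star_mul_self, ← CStarRing.norm_star_mul_self]
  exact hν.le_norm_of_isSelfAdjoint (.star_mul_self x)

/- With `k = 1 / max(a, r)` and `g = max(a - r, 0)` we have `g = k a g`. -/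
lemma cfc_max_sub_zero_eq_zero (hν : IsCStarNorm ν) {a : R} (ha : IsSelfAdjoint a) {r : ℝ}
    (hr : ν a < r) : cfc (fun t : ℝ ↦ max (t - r) 0) a = 0 := by
  have hr0 : 0 < r := (hν.map_nonneg a).trans_lt hr
  have h_max (t : ℝ) : 0 < max t r := hr0.trans_le (le_max_right t r)
  have hk_cont : Continuous fun t : ℝ ↦ (max t r)⁻¹ := by
    fun_prop (disch := exact fun t ↦ (h_max t).ne')
  set k := cfc (fun t : ℝ ↦ (max t r)⁻¹) a
  set g := cfc (fun t : ℝ ↦ max (t - r) 0) a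
  have hg_eq : k * a * g = g := by
    conv_lhs => rw [← cfc_id' ℝ a]
    rw [← cfc_mul _ (fun t ↦ t) a hk_cont.continuousOn,
      ← cfc_mul (fun t ↦ (max t r)⁻¹ * t) _ a (hk_cont.mul continuous_id).continuousOn]
    refine cfc_congr fun t _ ↦ ?_
    rcases le_total t r with h | h
    · simp [h]
    · simp [h, (hr0.trans_le h).ne']
  have hk_norm : ν k ≤ r⁻¹ := by
    refine (hν.le_norm k).trans (norm_cfc_le (by positivity) fun t _ ↦ ?_)
    rw [Real.norm_of_nonneg (inv_nonneg.2 (h_max t).le)]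
    exact inv_anti₀ hr0 (le_max_right t r)
  have hg_le : ν g ≤ r⁻¹ * ν a * ν g := calc
    ν g = ν (k * a * g) := by rw [hg_eq]
    _ ≤ ν k * ν a * ν g := (hν.mul_le _ _).trans
      (mul_le_mul_of_nonneg_right (hν.mul_le _ _) (hν.map_nonneg g))
    _ ≤ r⁻¹ * ν a * ν g := by gcongr <;> exact hν.map_nonneg _
  have h_lt : r⁻¹ * ν a < 1 := by rwa [inv_mul_lt_iff₀ hr0, mul_one]
  exact (hν.eq_zero_iff g).1 (by nlinarith [hν.map_nonneg g])

lemma norm_le_of_nonneg [PartialOrder R] [StarOrderedRing R] (hν : IsCStarNorm ν) {a : R}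
    (ha : 0 ≤ a) : ‖a‖ ≤ ν a := by
  refine le_of_forall_gt_imp_ge_of_dense fun r hr ↦ ?_
  have ha_sa : IsSelfAdjoint a := ha.isSelfAdjoint
  refine (CStarAlgebra.norm_le_iff_le_algebraMap a ((hν.map_nonneg a).trans hr.le)).2 ?_
  rw [← sub_nonpos, ← hν.cfc_max_sub_zero_eq_zero ha_sa hr]
  calc a - algebraMap ℝ R r = cfc (fun t : ℝ ↦ t - r) a := by
        rw [cfc_sub .., cfc_id' ℝ a, cfc_const r a]
    _ ≤ cfc (fun t : ℝ ↦ max (t - r) 0) a := cfc_mono fun t _ ↦ le_max_left _ _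

theorem eq_norm (hν : IsCStarNorm ν) (x : R) : ν x = ‖x‖ := by
  let _ := CStarAlgebra.spectralOrder R
  have _ := CStarAlgebra.spectralOrderedRing R
  refine le_antisymm (hν.le_norm x)
    ((mul_self_le_mul_self_iff (norm_nonneg x) (hν.map_nonneg x)).2 ?_)
  rw [← hν.star_mul_self, ← CStarRing.norm_star_mul_self]
  exact hν.norm_le_of_nonneg (star_mul_self_nonneg x)

lemma eq_norm_ofMatrix {A : Type*} [CStarAlgebra A] [PartialOrder A] [StarOrderedRing A]
    {n : Type*} [Fintype n] {μ : Matrix n n A → ℝ} (hμ : IsCStarNorm μ) (x : Matrix n n A) :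
    μ x = ‖CStarMatrix.ofMatrix x‖ := by
  classical
  have hμ' : IsCStarNorm fun x : CStarMatrix n n A ↦ μ (CStarMatrix.ofMatrix.symm x) :=
    ⟨hμ.add_le, hμ.smul_eq, hμ.eq_zero_iff, hμ.mul_le, hμ.star_mul_self⟩
  exact hμ'.eq_norm (CStarMatrix.ofMatrix x)

end IsCStarNorm

end UniqueCStarNorm

section Contraction

lemma weight_bounds {t w : ℝ} (ht : 0 ≤ t) (hw : w = (max t 1)⁻¹) :
    |1 - (w + w) + w * t * w| ≤ 1 ∧ 1 + (1 - (w + w) + w * t * w) ≤ t := by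
  rw [abs_le]
  rcases le_total t 1 with h | h
  · rw [max_eq_right h, inv_one] at hw
    subst hw
    refine ⟨⟨?_, ?_⟩, ?_⟩ <;> linarith
  · rw [max_eq_left h] at hw
    have h_pos : 0 < w := by rw [hw]; positivity
    have h_le_one : w ≤ 1 := hw ▸ inv_le_one_of_one_le₀ h
    have h_mul : w * t = 1 := by rw [hw, inv_mul_cancel₀ (by positivity)]
    rw [h_mul]
    refine ⟨⟨?_, ?_⟩, ?_⟩ <;> nlinarith

variable {R : Type*} [CStarAlgebra R] [PartialOrder R] [StarOrderedRing R]

/- The shape of `h` comes from `0 ≤ ∑ star (v k - u k * w) * (v k - u k * w)`: when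
`p = ∑ star (u k) * u k` and `∑ star (u k) * v k = 1`, it reads
`w + w - w * p * w ≤ ∑ star (v k) * v k`. The weight is `w = 1 / max(p, 1)`. -/
lemma exists_weight {p : R} (hp : 0 ≤ p) : ∃ w h : R, IsSelfAdjoint w ∧ IsSelfAdjoint h ∧
    ‖h‖ ≤ 1 ∧ h = 1 - (w + w) + w * p * w ∧ 1 + h ≤ p := by
  have h_spec {t : ℝ} (ht : t ∈ spectrum ℝ p) := weight_bounds (spectrum_nonneg_of_nonneg hp ht) rfl
  have hp_sa : IsSelfAdjoint p := hp.isSelfAdjoint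
  set f : ℝ → ℝ := fun t ↦ (max t 1)⁻¹
  set g : ℝ → ℝ := fun t ↦ 1 - (f t + f t) + f t * t * f t with hg
  have hf_cont : Continuous f := by
    fun_prop (disch := exact fun t ↦ (zero_lt_one.trans_le (le_max_right t 1)).ne')
  refine ⟨cfc f p, cfc g p, cfc_predicate _ _, cfc_predicate _ _,
    norm_cfc_le zero_le_one fun t ht ↦ (h_spec ht).1, ?_, ?_⟩
  · rw [hg, cfc_add p _ _ (by fun_prop) (by fun_prop), cfc_sub _ _ p (by fun_prop) (by fun_prop),
      cfc_add p _ _ (by fun_prop) (by fun_prop), cfc_mul _ _ p (by fun_prop) (by fun_prop),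
      cfc_mul _ _ p (by fun_prop) (by fun_prop), cfc_id' ℝ p, cfc_const_one ℝ p]
  · calc 1 + cfc g p = cfc (fun t ↦ 1 + g t) p := by
          rw [cfc_add p (fun _ ↦ 1) g (by fun_prop) (by fun_prop), cfc_const_one ℝ p]
      _ ≤ cfc id p := cfc_mono (fun t ht ↦ (h_spec ht).2) (by fun_prop) (by fun_prop)
      _ = p := cfc_id ℝ p

theorem exists_contraction_of_sum_star_mul_eq_one {κ : Type*} {s : Finset κ} {u v : κ → R}
    (huv : ∑ k ∈ s, star (u k) * v k = 1) : ∃ h : R, IsSelfAdjoint h ∧ ‖h‖ ≤ 1 ∧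
      1 + h ≤ ∑ k ∈ s, star (u k) * u k ∧ 1 - h ≤ ∑ k ∈ s, star (v k) * v k := by
  obtain ⟨w, h, hw, hh, h_norm, h_eq, h_le⟩ :=
    exists_weight (s.sum_nonneg fun k _ ↦ star_mul_self_nonneg (u k))
  refine ⟨h, hh, h_norm, h_le, ?_⟩
  have hvu : ∑ k ∈ s, star (v k) * u k = 1 := by
    simpa [star_sum] using congrArg star huv
  have h_sq : ∑ k ∈ s, star (v k - u k * w) * (v k - u k * w) =
      ∑ k ∈ s, star (v k) * v k - (∑ k ∈ s, star (v k) * u k) * w -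
        w * ∑ k ∈ s, star (u k) * v k + w * (∑ k ∈ s, star (u k) * u k) * w := by
    simp only [Finset.sum_mul, Finset.mul_sum, ← Finset.sum_sub_distrib, ← Finset.sum_add_distrib]
    refine Finset.sum_congr rfl fun k _ ↦ ?_
    rw [star_sub, star_mul, hw.star_eq]
    noncomm_ring
  have h_nonneg : 0 ≤ ∑ k ∈ s, star (v k - u k * w) * (v k - u k * w) :=
    s.sum_nonneg fun k _ ↦ star_mul_self_nonneg _
  rw [h_sq, hvu, huv] at h_nonneg
  rw [← sub_nonneg, h_eq]
  convert h_nonneg using 1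
  noncomm_ring

end Contraction

section MatrixForm

variable {A : Type*} [CStarAlgebra A]
  {H : Type*} [NormedAddCommGroup H] [InnerProductSpace ℂ H]

lemma IsCPMap.map_star [CompleteSpace H] {T : A →ₗ[ℂ] (H →L[ℂ] H)} (hT : IsCPMap T) (a : A) :
    T (star a) = star (T a) := by
  obtain ⟨z, hz⟩ := hT 2 (star !![1, a; 0, 0] * !![1, a; 0, 0]) ⟨_, rfl⟩
  have h_sa : star (star z * z) = star z * z := by simp
  rw [← hz] at h_sa
  have h_entry := congrFun₂ h_sa 1 0
  rw [Matrix.star_apply] at h_entry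
  simpa [Matrix.mul_apply, Matrix.star_apply, Fin.sum_univ_two] using h_entry.symm

/-- The matrix coefficient `a ↦ ⟪ξ, T a η⟫` of an operator-valued map. -/
def coef (T : A →ₗ[ℂ] (H →L[ℂ] H)) (ξ η : H) : A →ₗ[ℂ] ℂ where
  toFun a := ⟪ξ, T a η⟫_ℂ
  map_add' a b := by simp
  map_smul' c a := by simp

@[simp]
lemma coef_apply (T : A →ₗ[ℂ] (H →L[ℂ] H)) (ξ η : H) (a : A) : coef T ξ η a = ⟪ξ, T a η⟫_ℂ :=
  rfl

/-- The real functional `M ↦ re ⟪ξ, T⁽ⁿ⁾ M ξ⟫` on matrices, where `T⁽ⁿ⁾` is the entrywise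
application of `T` and `ξ : Fin n → H` is read as a vector of `Hⁿ`. -/
def matrixForm (T : A →ₗ[ℂ] (H →L[ℂ] H)) {n : ℕ} (ξ : Fin n → H) :
    CStarMatrix (Fin n) (Fin n) A →ₗ[ℝ] ℝ where
  toFun M := ∑ i, ∑ j, (coef T (ξ i) (ξ j) (M i j)).re
  map_add' M N := by simp [Finset.sum_add_distrib]
  map_smul' r M := by
    simp [LinearMap.map_smul_of_tower, Finset.mul_sum]

variable {n : ℕ} (ξ : Fin n → H)

lemma matrixForm_apply (T : A →ₗ[ℂ] (H →L[ℂ] H)) (M : CStarMatrix (Fin n) (Fin n) A) :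
    matrixForm T ξ M = ∑ i, ∑ j, (coef T (ξ i) (ξ j) (M i j)).re :=
  rfl

lemma matrixForm_sub (T₁ T₂ : A →ₗ[ℂ] (H →L[ℂ] H)) :
    matrixForm (T₁ - T₂) ξ = matrixForm T₁ ξ - matrixForm T₂ ξ := by
  ext M
  simp [matrixForm_apply]

lemma matrixForm_one (T : A →ₗ[ℂ] (H →L[ℂ] H)) :
    matrixForm T ξ 1 = ∑ i, (⟪ξ i, T 1 (ξ i)⟫_ℂ).re := by
  rw [matrixForm_apply]
  refine Finset.sum_congr rfl fun i _ ↦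
    (Finset.sum_eq_single i (fun j _ hij ↦ ?_) (by simp)).trans ?_
  · simp [hij.symm]
  · simp

/-- The real number `⟪ξ, (T₁ 1 + T₂ 1 - α) ξ⟫`: a common dilation satisfies
`‖V₁ ξ - V₂ ξ‖ ^ 2 ≤ α * ‖ξ‖ ^ 2` iff `2 re ⟪V₁ ξ, V₂ ξ⟫` is at least this number. -/
def overlap (T₁ T₂ : A →ₗ[ℂ] (H →L[ℂ] H)) (α : ℝ) (ξ : H) : ℝ :=
  (⟪ξ, T₁ 1 ξ⟫_ℂ).re + (⟪ξ, T₂ 1 ξ⟫_ℂ).re - α * ‖ξ‖ ^ 2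

lemma sum_overlap_eq (T₁ T₂ : A →ₗ[ℂ] (H →L[ℂ] H)) (α : ℝ) :
    ∑ i, overlap T₁ T₂ α (ξ i) =
      matrixForm T₁ ξ 1 + matrixForm T₂ ξ 1 - α * ∑ i, ‖ξ i‖ ^ 2 := by
  simp only [overlap, matrixForm_one, Finset.sum_sub_distrib, Finset.sum_add_distrib,
    Finset.mul_sum]

variable [CompleteSpace H]

lemma sum_inner_star_mul_self_apply (z : Matrix (Fin n) (Fin n) (H →L[ℂ] H)) :
    ∑ i, ∑ j, ⟪ξ i, (star z * z) i j (ξ j)⟫_ℂ =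
      ∑ k, ⟪∑ i, z k i (ξ i), ∑ j, z k j (ξ j)⟫_ℂ := by
  have h_entry (i j : Fin n) :
      ⟪ξ i, (star z * z) i j (ξ j)⟫_ℂ = ∑ k, ⟪z k i (ξ i), z k j (ξ j)⟫_ℂ := by
    simp only [Matrix.mul_apply, Matrix.star_apply, sum_apply, inner_sum,
      mul_apply_eq_comp, ContinuousLinearMap.star_eq_adjoint,
      ContinuousLinearMap.adjoint_inner_right]
  simp only [h_entry, sum_inner, inner_sum]
  rw [Finset.sum_congr rfl fun i _ ↦ Finset.sum_comm, Finset.sum_comm]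
  exact Finset.sum_congr rfl fun k _ ↦ Finset.sum_comm

lemma matrixForm_star_mul_self_nonneg {T : A →ₗ[ℂ] (H →L[ℂ] H)} (hT : IsCPMap T)
    (y : CStarMatrix (Fin n) (Fin n) A) : 0 ≤ matrixForm T ξ (star y * y) := by
  obtain ⟨z, hz⟩ := hT n _ ⟨CStarMatrix.ofMatrix.symm y, rfl⟩
  calc (0 : ℝ) ≤ (∑ i, ∑ j, ⟪ξ i, (star z * z) i j (ξ j)⟫_ℂ).re := by
        rw [sum_inner_star_mul_self_apply, Complex.re_sum]
        exact Finset.sum_nonneg fun k _ ↦ inner_self_nonneg (𝕜 := ℂ)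
    _ = matrixForm T ξ (star y * y) := by
        rw [← hz, matrixForm_apply]
        simp only [Complex.re_sum]
        rfl

variable [PartialOrder A] [StarOrderedRing A]

lemma matrixForm_nonneg {T : A →ₗ[ℂ] (H →L[ℂ] H)} (hT : IsCPMap T)
    {M : CStarMatrix (Fin n) (Fin n) A} (hM : 0 ≤ M) : 0 ≤ matrixForm T ξ M := by
  rw [StarOrderedRing.nonneg_iff] at hM
  induction hM using AddSubmonoid.closure_induction with
  | mem M h =>
    obtain ⟨y, rfl⟩ := h
    exact matrixForm_star_mul_self_nonneg ξ hT y
  | zero => rw [map_zero]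
  | add M N _ _ hM hN =>
    rw [map_add]
    exact add_nonneg hM hN

lemma matrixForm_mono {T : A →ₗ[ℂ] (H →L[ℂ] H)} (hT : IsCPMap T)
    {M N : CStarMatrix (Fin n) (Fin n) A} (h : M ≤ N) : matrixForm T ξ M ≤ matrixForm T ξ N := by
  simpa using matrixForm_nonneg ξ hT (sub_nonneg.2 h)

lemma matrixForm_le {T : A →ₗ[ℂ] (H →L[ℂ] H)} (hT : IsCPMap T)
    {M : CStarMatrix (Fin n) (Fin n) A} (hM : IsSelfAdjoint M) :
    matrixForm T ξ M ≤ ‖M‖ * matrixForm T ξ 1 := by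
  have h := matrixForm_mono ξ hT hM.le_algebraMap_norm_self
  rwa [Algebra.algebraMap_eq_smul_one, map_smul, smul_eq_mul] at h

/-- The completely bounded norm of `T` is at most `α`. -/
def CBNormLE (T : A →ₗ[ℂ] (H →L[ℂ] H)) (α : ℝ) : Prop :=
  ∀ (n : ℕ) (M : CStarMatrix (Fin n) (Fin n) A), ‖M.map T‖ ≤ α * ‖M‖

lemma matrixForm_le_of_cbNormLE {T : A →ₗ[ℂ] (H →L[ℂ] H)} {α : ℝ} (hT : CBNormLE T α)
    (hT_star : ∀ a, T (star a) = star (T a)) {M : CStarMatrix (Fin n) (Fin n) A}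
    (hM : IsSelfAdjoint M) : matrixForm T ξ M ≤ α * ‖M‖ * ∑ i, ‖ξ i‖ ^ 2 := by
  have h_id : IsCPMap (LinearMap.id : (H →L[ℂ] H) →ₗ[ℂ] (H →L[ℂ] H)) :=
    fun n x ⟨y, hy⟩ ↦ ⟨y, by simpa using hy⟩
  have h_map : IsSelfAdjoint (M.map T) := by
    rw [isSelfAdjoint_iff]
    ext1 i j
    rw [CStarMatrix.star_apply, CStarMatrix.map_apply, CStarMatrix.map_apply, ← hT_star,
      CStarMatrix.star_apply_of_isSelfAdjoint hM]
  calc matrixForm T ξ M = matrixForm LinearMap.id ξ (M.map T) := rfl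
    _ ≤ ‖M.map T‖ * matrixForm LinearMap.id ξ 1 := matrixForm_le ξ h_id h_map
    _ = ‖M.map T‖ * ∑ i, ‖ξ i‖ ^ 2 := by
        simp [matrixForm_one, ← Complex.ofReal_pow]
    _ ≤ α * ‖M‖ * ∑ i, ‖ξ i‖ ^ 2 := by
        gcongr
        exact hT n M

variable {T₁ T₂ : A →ₗ[ℂ] (H →L[ℂ] H)} {α : ℝ}

theorem sum_overlap_le_matrixForm (hT₁ : IsCPMap T₁) (hT₂ : IsCPMap T₂) (hα : 0 ≤ α)
    (hT : CBNormLE (T₁ - T₂) α) {κ : Type*} {s : Finset κ}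
    {u v : κ → CStarMatrix (Fin n) (Fin n) A} (huv : ∑ k ∈ s, star (u k) * v k = 1) :
    ∑ i, overlap T₁ T₂ α (ξ i) ≤ matrixForm T₁ ξ (∑ k ∈ s, star (u k) * u k) +
      matrixForm T₂ ξ (∑ k ∈ s, star (v k) * v k) := by
  obtain ⟨h, hh, h_norm, hu, hv⟩ := exists_contraction_of_sum_star_mul_eq_one huv
  have hu' := matrixForm_mono ξ hT₁ hu
  have hv' := matrixForm_mono ξ hT₂ hv
  have h_diff := matrixForm_le_of_cbNormLE ξ hT
    (fun a ↦ by simp [hT₁.map_star, hT₂.map_star]) hh.neg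
  rw [matrixForm_sub, LinearMap.sub_apply, map_neg, map_neg, norm_neg] at h_diff
  have h_scale : α * ‖h‖ * ∑ i, ‖ξ i‖ ^ 2 ≤ α * ∑ i, ‖ξ i‖ ^ 2 := by
    gcongr
    exact mul_le_of_le_one_right hα h_norm
  rw [map_add] at hu'
  rw [map_sub] at hv'
  rw [sum_overlap_eq]
  linarith

end MatrixForm

section RowForm

variable {A : Type*} [CStarAlgebra A]
  {H : Type*} [NormedAddCommGroup H] [InnerProductSpace ℂ H] {n : ℕ}

/-- The quadratic form `a ↦ re ∑ i j, ⟪ξ i, T (star (a i) * a j) (ξ j)⟫` on rows with entries in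
`A`. -/
def rowForm (T : A →ₗ[ℂ] (H →L[ℂ] H)) (ξ : Fin n → H) (a : Fin n → A) : ℝ :=
  matrixForm T ξ (CStarMatrix.ofMatrix (Matrix.vecMulVec (star a) a))

lemma rowForm_eq_sum (T : A →ₗ[ℂ] (H →L[ℂ] H)) (ξ : Fin n → H) (a : Fin n → A) :
    rowForm T ξ a = ∑ i, ∑ j, (⟪ξ i, T (star (a i) * a j) (ξ j)⟫_ℂ).re :=
  rfl

lemma rowForm_smul_inv_smul (T : A →ₗ[ℂ] (H →L[ℂ] H)) (ξ : Fin n → H) (a : Fin n → A)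
    {r : Fin n → ℝ} (hr : ∀ i, r i ≠ 0) :
    rowForm T (fun i ↦ (r i : ℂ) • ξ i) (fun i ↦ ((r i)⁻¹ : ℂ) • a i) = rowForm T ξ a := by
  simp only [rowForm_eq_sum]
  refine Finset.sum_congr rfl fun i _ ↦ Finset.sum_congr rfl fun j _ ↦ ?_
  rw [← Complex.ofReal_inv, ← Complex.ofReal_inv]
  simp only [Complex.coe_smul, star_smul, star_trivial, smul_mul_smul_comm,
    LinearMap.map_smul_of_tower, ContinuousLinearMap.map_smul_of_tower, smul_apply,
    inner_smul_right_eq_smul, inner_smul_left_eq_smul, Complex.smul_re, smul_eq_mul]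
  field [hr i, hr j]

lemma rowForm_smul (T : A →ₗ[ℂ] (H →L[ℂ] H)) (ξ : Fin n → H) (a : Fin n → A) (r : ℝ) :
    rowForm T ξ (fun i ↦ (r : ℂ) • a i) = r ^ 2 * rowForm T ξ a := by
  simp only [rowForm_eq_sum, Finset.mul_sum]
  refine Finset.sum_congr rfl fun i _ ↦ Finset.sum_congr rfl fun j _ ↦ ?_
  simp only [Complex.coe_smul, star_smul, star_trivial, smul_mul_smul_comm,
    LinearMap.map_smul_of_tower, smul_apply, inner_smul_right_eq_smul, Complex.smul_re, smul_eq_mul]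
  ring

lemma rowForm_single (T : A →ₗ[ℂ] (H →L[ℂ] H)) (ξ : Fin n → H) (i : Fin n) (r : ℝ) :
    rowForm T ξ (Pi.single i ((r : ℂ) • 1)) = r ^ 2 * (⟪ξ i, T 1 (ξ i)⟫_ℂ).re := by
  rw [rowForm_eq_sum, Finset.sum_eq_single i, Finset.sum_eq_single i]
  · simp only [Complex.coe_smul, Pi.single_eq_same, star_smul, star_trivial, star_one,
      smul_mul_smul_comm, mul_one, LinearMap.map_smul_of_tower, smul_apply,
      inner_smul_right_eq_smul, Complex.smul_re, smul_eq_mul]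
    ring
  · intro j _ hj
    simp [hj]
  · simp
  · intro j _ hj
    simp [hj]
  · simp

lemma overlap_smul (T₁ T₂ : A →ₗ[ℂ] (H →L[ℂ] H)) (α r : ℝ) (ξ : H) :
    overlap T₁ T₂ α ((r : ℂ) • ξ) = r ^ 2 * overlap T₁ T₂ α ξ := by
  simp only [overlap, Complex.coe_smul, ContinuousLinearMap.map_smul_of_tower,
    inner_smul_right_eq_smul, inner_smul_left_eq_smul, Complex.smul_re, smul_eq_mul, norm_smul,
    mul_pow, Real.norm_eq_abs, sq_abs]
  ring

lemma sum_vecMulVec_star_single (c : A) :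
    ∑ i : Fin n, Matrix.vecMulVec (star (Pi.single i c)) (Pi.single i c) =
      .diagonal fun _ ↦ star c * c := by
  ext i j
  rw [Matrix.sum_apply, Finset.sum_eq_single i]
  · rcases eq_or_ne i j with rfl | hij
    · simp [Matrix.vecMulVec_apply]
    · simp [Matrix.vecMulVec_apply, hij, hij.symm]
  · intro k _ hk
    simp [Matrix.vecMulVec_apply, hk.symm]
  · simp

/-- The square matrix with first row `a` and all other rows zero. -/
def firstRow (a : Fin (n + 1) → A) : CStarMatrix (Fin (n + 1)) (Fin (n + 1)) A :=
  CStarMatrix.ofMatrix (Matrix.updateRow 0 0 a)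

lemma star_firstRow_mul (a b : Fin (n + 1) → A) :
    star (firstRow a) * firstRow b = CStarMatrix.ofMatrix (Matrix.vecMulVec (star a) b) := by
  ext i j
  rw [CStarMatrix.mul_apply, Finset.sum_eq_single 0]
  · simp [firstRow, Matrix.vecMulVec_apply, CStarMatrix.star_apply]
  · intro k _ hk
    simp [firstRow, hk]
  · simp

variable [PartialOrder A] [StarOrderedRing A] [CompleteSpace H]
  {T₁ T₂ : A →ₗ[ℂ] (H →L[ℂ] H)} {α : ℝ} (ξ : Fin n → H) {κ : Type*} {s : Finset κ}
  {a b : κ → Fin n → A} {d : Fin n → ℝ}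

lemma sum_overlap_le_rowForm (hT₁ : IsCPMap T₁) (hT₂ : IsCPMap T₂) (hα : 0 ≤ α)
    (hT : CBNormLE (T₁ - T₂) α)
    (hab : ∑ k ∈ s, Matrix.vecMulVec (star (a k)) (b k) = 1) :
    ∑ i, overlap T₁ T₂ α (ξ i) ≤ ∑ k ∈ s, (rowForm T₁ ξ (a k) + rowForm T₂ ξ (b k)) := by
  rcases n with _ | n
  · simp [rowForm_eq_sum]
  · have h := sum_overlap_le_matrixForm ξ hT₁ hT₂ hα hT (s := s) (u := fun k ↦ firstRow (a k))
      (v := fun k ↦ firstRow (b k)) (by simp only [star_firstRow_mul]; exact hab)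
    simpa only [star_firstRow_mul, map_sum, ← Finset.sum_add_distrib, rowForm] using h

lemma sum_mul_overlap_le_rowForm_of_pos (hT₁ : IsCPMap T₁) (hT₂ : IsCPMap T₂) (hα : 0 ≤ α)
    (hT : CBNormLE (T₁ - T₂) α) (hd : ∀ i, 0 < d i)
    (hab : ∑ k ∈ s, Matrix.vecMulVec (star (a k)) (b k) = .diagonal fun i ↦ (d i : ℂ) • 1) :
    ∑ i, d i * overlap T₁ T₂ α (ξ i) ≤
      ∑ k ∈ s, (rowForm T₁ ξ (a k) + rowForm T₂ ξ (b k)) := by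
  set r : Fin n → ℝ := fun i ↦ √(d i)
  have hr (i : Fin n) : r i ≠ 0 := (Real.sqrt_pos.2 (hd i)).ne'
  have hrr (i : Fin n) : r i ^ 2 = d i := Real.sq_sqrt (hd i).le
  have h_one : ∑ k ∈ s, Matrix.vecMulVec (star fun i ↦ ((r i)⁻¹ : ℂ) • a k i)
      (fun i ↦ ((r i)⁻¹ : ℂ) • b k i) = 1 := by
    ext i j
    have h_entry := congrFun₂ hab i j
    simp only [Matrix.sum_apply, Matrix.vecMulVec_apply, Pi.star_apply] at h_entry ⊢
    simp only [star_smul, smul_mul_smul_comm, ← Finset.smul_sum, h_entry]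
    rcases eq_or_ne i j with rfl | hij
    · have hi : (r i : ℂ) ≠ 0 := mod_cast hr i
      have h_cancel : (r i : ℂ)⁻¹ * (r i : ℂ)⁻¹ * (r i : ℂ) ^ 2 = 1 := by field
      simp [← hrr, smul_smul, h_cancel]
    · simp [hij]
  have h := sum_overlap_le_rowForm (fun i ↦ (r i : ℂ) • ξ i) hT₁ hT₂ hα hT h_one
  simpa only [overlap_smul, hrr, rowForm_smul_inv_smul _ _ _ hr] using h

/- Adding the rows `√ε • Pi.single i 1` to both families turns `d` into `d + ε`. -/
theorem sum_mul_overlap_le_rowForm (hT₁ : IsCPMap T₁) (hT₂ : IsCPMap T₂) (hα : 0 ≤ α)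
    (hT : CBNormLE (T₁ - T₂) α) (hd : ∀ i, 0 ≤ d i)
    (hab : ∑ k ∈ s, Matrix.vecMulVec (star (a k)) (b k) = .diagonal fun i ↦ (d i : ℂ) • 1) :
    ∑ i, d i * overlap T₁ T₂ α (ξ i) ≤
      ∑ k ∈ s, (rowForm T₁ ξ (a k) + rowForm T₂ ξ (b k)) := by
  have h_perturbed {ε : ℝ} (hε : 0 < ε) : ∑ i, d i * overlap T₁ T₂ α (ξ i) ≤
      ∑ k ∈ s, (rowForm T₁ ξ (a k) + rowForm T₂ ξ (b k)) + ε * (α * ∑ i, ‖ξ i‖ ^ 2) := by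
    have h := sum_mul_overlap_le_rowForm_of_pos ξ hT₁ hT₂ hα hT (s := s.disjSum Finset.univ)
      (a := Sum.elim a fun i ↦ Pi.single i (((√ε : ℝ) : ℂ) • 1))
      (b := Sum.elim b fun i ↦ Pi.single i (((√ε : ℝ) : ℂ) • 1)) (d := fun i ↦ d i + ε)
      (fun i ↦ add_pos_of_nonneg_of_pos (hd i) hε) ?_
    · simp only [Finset.sum_disjSum, Sum.elim_inl, Sum.elim_inr, rowForm_single,
        Real.sq_sqrt hε.le, add_mul, Finset.sum_add_distrib, ← Finset.mul_sum, overlap,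
        Finset.sum_sub_distrib] at h ⊢
      linarith
    · simp only [Finset.sum_disjSum, Sum.elim_inl, Sum.elim_inr, hab,
        sum_vecMulVec_star_single, Matrix.diagonal_add]
      simp [smul_smul, add_smul, hε.le]
  have h_tendsto : Filter.Tendsto (fun ε ↦ ∑ k ∈ s, (rowForm T₁ ξ (a k) + rowForm T₂ ξ (b k)) +
      ε * (α * ∑ i, ‖ξ i‖ ^ 2)) (nhdsWithin 0 (Set.Ioi 0))
      (nhds (∑ k ∈ s, (rowForm T₁ ξ (a k) + rowForm T₂ ξ (b k)))) :=
    (Continuous.tendsto' (by fun_prop) 0 _ (by simp)).mono_left nhdsWithin_le_nhds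
  exact ge_of_tendsto h_tendsto (eventually_nhdsWithin_of_forall fun ε hε ↦ h_perturbed hε)

end RowForm

section Separation

/- This is M. Riesz extension from the last coordinate axis of `W × ℝ`, for the cone spanned by the
pairs `(w i, t i)`. -/
theorem exists_dual_le {ι W : Type*} [AddCommGroup W] [Module ℝ W] {w : ι → W} {t : ι → ℝ}
    (h_span : Submodule.span ℝ≥0 (Set.range w) = ⊤)
    (h_nonneg : ∀ c : ι →₀ ℝ≥0, c.sum (fun i r ↦ r • w i) = 0 → 0 ≤ c.sum fun i r ↦ r * t i) :
    ∃ g : Module.Dual ℝ W, ∀ i, g (w i) ≤ t i := by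
  let C : PointedCone ℝ (W × ℝ) := PointedCone.hull ℝ (Set.range fun i ↦ (w i, t i))
  have h_mem {z : W × ℝ} : z ∈ C ↔ ∃ c : ι →₀ ℝ≥0,
      c.sum (fun i r ↦ r • w i) = z.1 ∧ c.sum (fun i r ↦ r * t i) = z.2 := by
    simp only [C, PointedCone.hull, Finsupp.mem_span_range_iff_exists_finsupp, Prod.ext_iff,
      Finsupp.sum, Prod.fst_sum, Prod.snd_sum, Prod.smul_mk, NNReal.smul_def]
    rfl
  let axis : W × ℝ →ₗ.[ℝ] ℝ :=
    ⟨LinearMap.ker (LinearMap.fst ℝ W ℝ), LinearMap.snd ℝ W ℝ ∘ₗ Submodule.subtype _⟩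
  have h_axis_nonneg (z : axis.domain) (hz : (z : W × ℝ) ∈ C) : 0 ≤ axis z := by
    obtain ⟨c, hc, hct⟩ := h_mem.1 hz
    exact (h_nonneg c (hc.trans z.2)).trans_eq hct
  have h_cofinal (z : W × ℝ) : ∃ y : axis.domain, (y : W × ℝ) + z ∈ C := by
    have hz : z.1 ∈ Submodule.span ℝ≥0 (Set.range w) := h_span ▸ Submodule.mem_top
    obtain ⟨c, hc⟩ := Finsupp.mem_span_range_iff_exists_finsupp.1 hz
    exact ⟨⟨(0, c.sum (fun i r ↦ r * t i) - z.2), rfl⟩, h_mem.2 ⟨c, by simp [hc]⟩⟩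
  obtain ⟨G, hG_axis, hG_nonneg⟩ := riesz_extension C axis h_axis_nonneg h_cofinal
  have hG (r : ℝ) : G (0, r) = r := hG_axis ⟨(0, r), rfl⟩
  refine ⟨-(G ∘ₗ LinearMap.inl ℝ W ℝ), fun i ↦ ?_⟩
  have h_le : 0 ≤ G (w i, t i) := hG_nonneg _ (Submodule.subset_span ⟨i, rfl⟩)
  have h_split : (w i, t i) = (w i, 0) + (0, t i) := by simp
  rw [h_split, map_add, hG] at h_le
  simp only [LinearMap.neg_apply, LinearMap.comp_apply, LinearMap.inl_apply]
  linarith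

end Separation

section Gram

variable {A : Type*} [Ring A] {J : Type*}

lemma sum_smul_single_diag_apply [Algebra ℂ A] (ρ : J →₀ ℝ≥0) (i j : J) [Decidable (i = j)] :
    ρ.sum (fun k r ↦ r • Finsupp.single (k, k) (1 : A)) (i, j) =
      if i = j then ((ρ i : ℝ) : ℂ) • 1 else 0 := by
  classical
  rw [Finsupp.sum_apply]
  split_ifs with hij
  · subst hij
    rw [Finsupp.sum_eq_single i (fun k _ hk ↦ by simp [hk]) (by simp)]
    simp [NNReal.smul_def, Complex.coe_smul]
  · refine Finset.sum_eq_zero fun k _ ↦ ?_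
    have h_ne : (i, j) ≠ (k, k) := by aesop
    simp [h_ne]

lemma mem_support_product_of_star_mul_ne_zero [StarRing A] {u v : J →₀ A} {p : J × J}
    (hp : star (u p.1) * v p.2 ≠ 0) : p ∈ u.support ×ˢ v.support := by
  rw [Finset.mem_product, Finsupp.mem_support_iff, Finsupp.mem_support_iff]
  exact ⟨fun h ↦ hp (by simp [h]), fun h ↦ hp (by simp [h])⟩

variable [StarRing A] [Algebra ℂ A] [StarModule ℂ A]

/-- The sesquilinear map sending rows `u` and `v` to the matrix with entries
`star (u i) * v j`. -/
def gram : (J →₀ A) →ₗ⋆[ℂ] (J →₀ A) →ₗ[ℂ] (J × J →₀ A) :=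
  LinearMap.mk₂'ₛₗ (starRingEnd ℂ) (RingHom.id ℂ)
    (fun u v ↦ Finsupp.onFinset (u.support ×ˢ v.support) (fun p ↦ star (u p.1) * v p.2)
      fun p ↦ mem_support_product_of_star_mul_ne_zero)
    (fun u₁ u₂ v ↦ by ext; simp [add_mul])
    (fun c u v ↦ by ext; simp)
    (fun u v₁ v₂ ↦ by ext; simp [mul_add])
    (fun c u v ↦ by ext; simp)

@[simp]
lemma gram_apply (u v : J →₀ A) (p : J × J) : gram u v p = star (u p.1) * v p.2 :=
  rfl

lemma support_gram_subset (u v : J →₀ A) : (gram u v).support ⊆ u.support ×ˢ v.support :=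
  fun _ hp ↦ mem_support_product_of_star_mul_ne_zero (Finsupp.mem_support_iff.1 hp)

lemma gram_single_single (i j : J) (a b : A) :
    gram (.single i a) (.single j b) = .single (i, j) (star a * b) := by
  classical
  ext ⟨k, l⟩
  simp only [gram_apply, Finsupp.single_apply, Prod.mk.injEq]
  split_ifs <;> simp_all

lemma gram_smul_left (a : A) (u v : J →₀ A) :
    gram (a • u) v = gram u (star a • v) := by
  ext
  simp [mul_assoc]

lemma span_range_gram :
    Submodule.span ℝ≥0 (Set.range fun p : (J →₀ A) × (J →₀ A) ↦ gram p.1 p.2) = ⊤ := by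
  refine Submodule.eq_top_iff'.2 fun z ↦ ?_
  induction z using Finsupp.induction_linear with
  | zero => exact zero_mem _
  | add y z hy hz => exact add_mem hy hz
  | single p a =>
    exact Submodule.subset_span ⟨(.single p.1 1, .single p.2 a), by simp [gram_single_single]⟩

end Gram

section OperatorForm

variable {A : Type*} [CStarAlgebra A]
  {H : Type*} [NormedAddCommGroup H] [InnerProductSpace ℂ H]

/-- The sesquilinear form `(u, v) ↦ ∑ x y, ⟪x, T (star (u x) * v y) y⟫`, whose Hausdorff completion
is the Stinespring space of `T`. -/
def opForm (T : A →ₗ[ℂ] (H →L[ℂ] H)) : (H →₀ A) →ₗ⋆[ℂ] (H →₀ A) →ₗ[ℂ] ℂ :=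
  gram.compr₂ₛₗ (Finsupp.lsum ℂ fun p ↦ coef T p.1 p.2)

lemma opForm_single_single (T : A →ₗ[ℂ] (H →L[ℂ] H)) (x y : H) (a b : A) :
    opForm T (.single x a) (.single y b) = ⟪x, T (star a * b) y⟫_ℂ := by
  rw [opForm, LinearMap.compr₂ₛₗ_apply, gram_single_single, Finsupp.lsum_single, coef_apply]

lemma opForm_smul_left (T : A →ₗ[ℂ] (H →L[ℂ] H)) (a : A) (u v : H →₀ A) :
    opForm T (a • u) v = opForm T u (star a • v) := by
  rw [opForm, LinearMap.compr₂ₛₗ_apply, gram_smul_left]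
  rfl

lemma opForm_eq_sum (T : A →ₗ[ℂ] (H →L[ℂ] H)) {u v : H →₀ A} {F : Finset H}
    (hu : u.support ⊆ F) (hv : v.support ⊆ F) :
    opForm T u v = ∑ x ∈ F, ∑ y ∈ F, ⟪x, T (star (u x) * v y) y⟫_ℂ := by
  have h_supp : (gram u v).support ⊆ F ×ˢ F :=
    (support_gram_subset u v).trans (Finset.product_subset_product hu hv)
  rw [← Finset.sum_product']
  exact Finsupp.sum_of_support_subset _ h_supp _ (by simp)

lemma re_opForm_self_eq_rowForm (T : A →ₗ[ℂ] (H →L[ℂ] H)) {u : H →₀ A} {n : ℕ} {e : Fin n ↪ H}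
    (hu : u.support ⊆ Finset.univ.map e) :
    (opForm T u u).re = rowForm T e fun i ↦ u (e i) := by
  simp [opForm_eq_sum T hu hu, rowForm_eq_sum]

lemma opForm_conj [CompleteSpace H] {T : A →ₗ[ℂ] (H →L[ℂ] H)}
    (hT : ∀ a, T (star a) = star (T a)) (u v : H →₀ A) :
    starRingEnd ℂ (opForm T u v) = opForm T v u := by
  classical
  rw [opForm_eq_sum T Finset.subset_union_left (Finset.subset_union_right (s₁ := u.support)),
    opForm_eq_sum T Finset.subset_union_right (Finset.subset_union_left (s₂ := v.support)),
    Finset.sum_comm]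
  simp only [map_sum]
  refine Finset.sum_congr rfl fun y _ ↦ Finset.sum_congr rfl fun x _ ↦ ?_
  rw [inner_conj_symm, ← ContinuousLinearMap.adjoint_inner_right,
    ← ContinuousLinearMap.star_eq_adjoint, ← hT, star_mul, star_star]

end OperatorForm

lemma exists_fin_embedding_map_univ_eq {ι : Type*} (F : Finset ι) :
    ∃ (n : ℕ) (e : Fin n ↪ ι), Finset.univ.map e = F :=
  ⟨_, F.equivFin.symm.toEmbedding.trans (.subtype _), by
    rw [← Finset.map_map, Finset.map_univ_equiv, Finset.univ_eq_attach]
    exact Finset.attach_map_val⟩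

section Pairing

variable {A : Type*} [CStarAlgebra A] [PartialOrder A] [StarOrderedRing A]
  {H : Type*} [NormedAddCommGroup H] [InnerProductSpace ℂ H] [CompleteSpace H]
  {T₁ T₂ : A →ₗ[ℂ] (H →L[ℂ] H)} {α : ℝ}

lemma sum_overlap_le_opForm (hT₁ : IsCPMap T₁) (hT₂ : IsCPMap T₂) (hα : 0 ≤ α)
    (hT : CBNormLE (T₁ - T₂) α) {c : (H →₀ A) × (H →₀ A) →₀ ℝ≥0} {ρ : H →₀ ℝ≥0}
    (h_eq : c.sum (fun k r ↦ r • gram k.1 k.2) =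
      ρ.sum fun x r ↦ r • Finsupp.single (x, x) (1 : A)) :
    ρ.sum (fun x r ↦ r * overlap T₁ T₂ α x) ≤
      c.sum fun k r ↦ r * ((opForm T₁ k.1 k.1).re + (opForm T₂ k.2 k.2).re) := by
  classical
  let F : Finset H :=
    ρ.support ∪ c.support.biUnion fun k ↦ k.1.support ∪ k.2.support
  obtain ⟨n, e, he⟩ := exists_fin_embedding_map_univ_eq F
  have hρ : ρ.support ⊆ Finset.univ.map e := by
    rw [he]
    exact Finset.subset_union_left
  have hc {k : (H →₀ A) × (H →₀ A)} (hk : k ∈ c.support) :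
      k.1.support ⊆ Finset.univ.map e ∧ k.2.support ⊆ Finset.univ.map e := by
    rw [he, ← Finset.union_subset_iff]
    exact (Finset.subset_biUnion_of_mem (fun k : (H →₀ A) × (H →₀ A) ↦ k.1.support ∪ k.2.support)
      hk).trans Finset.subset_union_right
  have h_row := sum_mul_overlap_le_rowForm e hT₁ hT₂ hα hT (s := c.support) (d := fun i ↦ ρ (e i))
    (a := fun k i ↦ ((√(c k) : ℝ) : ℂ) • k.1 (e i))
    (b := fun k i ↦ ((√(c k) : ℝ) : ℂ) • k.2 (e i)) (fun i ↦ NNReal.coe_nonneg _) ?_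
  · calc ρ.sum (fun x r ↦ r * overlap T₁ T₂ α x)
        = ∑ x ∈ Finset.univ.map e, ρ x * overlap T₁ T₂ α x :=
          Finsupp.sum_of_support_subset _ hρ _ (by simp)
      _ = ∑ i, ρ (e i) * overlap T₁ T₂ α (e i) := Finset.sum_map _ _ _
      _ ≤ _ := h_row
      _ = _ := Finset.sum_congr rfl fun k hk ↦ by
          dsimp only
          rw [rowForm_smul, rowForm_smul, re_opForm_self_eq_rowForm T₁ (hc hk).1,
            re_opForm_self_eq_rowForm T₂ (hc hk).2, Real.sq_sqrt (NNReal.coe_nonneg _), mul_add]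
  · ext i j
    have h_entry := DFunLike.congr_fun h_eq (e i, e j)
    rw [sum_smul_single_diag_apply, Finsupp.sum_apply] at h_entry
    simp only [Matrix.sum_apply, Matrix.vecMulVec_apply, Pi.star_apply, star_smul,
      smul_mul_smul_comm, Matrix.diagonal_apply, ← e.apply_eq_iff_eq, ← h_entry]
    refine Finset.sum_congr rfl fun k _ ↦ ?_
    simp only [Complex.conj_ofReal, RCLike.star_def, ← Complex.ofReal_mul,
      Real.mul_self_sqrt (NNReal.coe_nonneg _), Complex.coe_smul]
    rfl

/- Taking `-u` for `u` turns the first family of constraints into the upper bounds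
`2 * re (X (gram u v)) ≤ re (opForm T₁ u u) + re (opForm T₂ v v)`. -/
theorem exists_pairing (hT₁ : IsCPMap T₁) (hT₂ : IsCPMap T₂) (hα : 0 ≤ α)
    (hT : CBNormLE (T₁ - T₂) α) :
    ∃ X : (H × H →₀ A) →ₗ[ℂ] ℂ,
      (∀ u v, 0 ≤ (opForm T₁ u u).re + (opForm T₂ v v).re + 2 * (X (gram u v)).re) ∧
      ∀ x, overlap T₁ T₂ α x ≤ 2 * (X (.single (x, x) 1)).re := by
  let w : ((H →₀ A) × (H →₀ A)) ⊕ H → (H × H →₀ A) :=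
    Sum.elim (fun k ↦ gram k.1 k.2) fun x ↦ -.single (x, x) 1
  let t : ((H →₀ A) × (H →₀ A)) ⊕ H → ℝ :=
    Sum.elim (fun k ↦ (opForm T₁ k.1 k.1).re + (opForm T₂ k.2 k.2).re) fun x ↦ -overlap T₁ T₂ α x
  have h_span : Submodule.span ℝ≥0 (Set.range w) = ⊤ := by
    rw [Set.Sum.elim_range, Submodule.span_union, span_range_gram, top_sup_eq]
  have h_nonneg (c : ((H →₀ A) × (H →₀ A)) ⊕ H →₀ ℝ≥0) (hc : c.sum (fun i r ↦ r • w i) = 0) :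
      0 ≤ c.sum fun i r ↦ r * t i := by
    obtain ⟨c, ρ, rfl⟩ : ∃ c' ρ, c = Finsupp.sumElim c' ρ :=
      ⟨_, _, (Finsupp.comapDomain_sumElim_comapDomain c).symm⟩
    rw [Finsupp.sum_sumElim] at hc ⊢
    have h := sum_overlap_le_opForm hT₁ hT₂ hα hT (c := c) (ρ := ρ) ?_
    · simpa [Function.comp_def, t, Finsupp.sum, Finset.sum_neg_distrib] using h
    · simpa [Function.comp_def, w, Finsupp.sum, Finset.sum_neg_distrib, ← sub_eq_add_neg,
        sub_eq_zero] using hc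
  obtain ⟨g, hg⟩ := exists_dual_le h_span h_nonneg
  have h_re (z : H × H →₀ A) : 2 * (((1 / 2 : ℂ) • g.extendRCLike (𝕜 := ℂ)) z).re = g z := by
    rw [← g.re_extendRCLike_apply (𝕜 := ℂ) z]
    simp [-Module.Dual.re_extendRCLike_apply]
  refine ⟨(1 / 2 : ℂ) • g.extendRCLike, fun u v ↦ ?_, fun x ↦ ?_⟩
  · rw [h_re, ← neg_le_iff_add_nonneg]
    simpa [w, t] using hg (.inl (-u, v))
  · rw [h_re]
    simpa [w, t] using hg (.inr x)

end Pairing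

section GNS

lemma clm_completion_ext {E F : Type*} [SeminormedAddCommGroup E] [NormedSpace ℂ E]
    [NormedAddCommGroup F] [NormedSpace ℂ F] {f g : Completion E →L[ℂ] F}
    (h : ∀ x : E, f x = g x) : f = g :=
  DFunLike.coe_injective (Completion.ext f.continuous g.continuous h)

/-- A positive semidefinite Hermitian form on a left `A`-module for which the action of `star a` is
adjoint to the action of `a`; it generalizes `(x, y) ↦ f (star x * y)` for a positive linear
functional `f` on `A`. -/
structure IsInvariantForm (A : Type*) [Star A] {E : Type*} [AddCommGroup E] [Module ℂ E] [SMul A E]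
    (B : E →ₗ⋆[ℂ] E →ₗ[ℂ] ℂ) : Prop extends B.IsPosSemidef where
  smul_left (a : A) (x y : E) : B (a • x) y = B x (star a • y)

namespace IsInvariantForm

variable {A : Type*} [CStarAlgebra A]
  {E : Type*} [AddCommGroup E] [Module ℂ E] [Module A E]
  {B : E →ₗ⋆[ℂ] E →ₗ[ℂ] ℂ}

/-- The module `E` with the seminorm of an invariant form. This is a type synonym of `E`; its
completion is the Hilbert space `IsInvariantForm.GNS`. -/
def PreGNS (_ : IsInvariantForm A B) : Type _ :=
  E

variable (hB : IsInvariantForm A B)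

instance : AddCommGroup hB.PreGNS := inferInstanceAs (AddCommGroup E)
instance : Module ℂ hB.PreGNS := inferInstanceAs (Module ℂ E)
instance : Module A hB.PreGNS := inferInstanceAs (Module A E)

/-- The semi-inner product on `PreGNS` given by the form. -/
abbrev preGNSCore : PreInnerProductSpace.Core ℂ hB.PreGNS where
  inner x y := B x y
  conj_inner_symm x y := hB.isSymm.eq y x
  re_inner_nonneg x := (Complex.nonneg_iff.1 (hB.isNonneg.nonneg x)).1
  add_left := B.map_add₂
  smul_left x y c := B.map_smulₛₗ₂ c x y

instance : SeminormedAddCommGroup hB.PreGNS :=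
  InnerProductSpace.Core.toSeminormedAddCommGroup (c := hB.preGNSCore)
instance : InnerProductSpace ℂ hB.PreGNS := InnerProductSpace.ofCore hB.preGNSCore

lemma inner_smul_left_preGNS (a : A) (x y : hB.PreGNS) : ⟪a • x, y⟫_ℂ = ⟪x, star a • y⟫_ℂ :=
  hB.smul_left a x y

/-- The Hilbert space of an invariant form. -/
abbrev GNS : Type _ :=
  Completion hB.PreGNS

/-- The canonical map from the module to the Hilbert space of an invariant form. -/
def toGNS (x : E) : hB.GNS :=
  (show hB.PreGNS from x : hB.PreGNS)

variable [IsScalarTower ℂ A E]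

instance : IsScalarTower ℂ A hB.PreGNS := inferInstanceAs (IsScalarTower ℂ A E)

lemma re_smul_self_le (hB : IsInvariantForm A B) (a : A) (x : E) :
    (B (a • x) (a • x)).re ≤ ‖a‖ ^ 2 * (B x x).re := by
  let _ := CStarAlgebra.spectralOrder A
  have _ := CStarAlgebra.spectralOrderedRing A
  obtain ⟨d, hd⟩ : ∃ d : A, algebraMap ℝ A (‖a‖ ^ 2) - star a * a = star d * d :=
    CStarAlgebra.nonneg_iff_eq_star_mul_self.1
      (sub_nonneg.2 CStarAlgebra.star_mul_le_algebraMap_norm_sq)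
  have h_sum : (star a * a + star d * d) • x = ((‖a‖ ^ 2 : ℝ) : ℂ) • x := by
    rw [← hd, add_sub_cancel, Algebra.algebraMap_eq_smul_one, ← Complex.coe_smul, smul_assoc,
      one_smul]
  have h_re := congrArg (fun y ↦ (B x y).re) h_sum
  simp only [add_smul, mul_smul, map_add, map_smul, smul_eq_mul, Complex.add_re,
    Complex.re_ofReal_mul] at h_re
  have h_nonneg : 0 ≤ (B (d • x) (d • x)).re := (Complex.nonneg_iff.1 (hB.isNonneg.nonneg _)).1
  rw [hB.smul_left] at h_nonneg ⊢
  linarith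

lemma norm_smul_le (a : A) (x : hB.PreGNS) : ‖a • x‖ ≤ ‖a‖ * ‖x‖ := by
  rw [← sq_le_sq₀ (by positivity) (by positivity), mul_pow, norm_sq_eq_re_inner (𝕜 := ℂ),
    norm_sq_eq_re_inner (𝕜 := ℂ) x]
  exact hB.re_smul_self_le a x

/-- The action of an algebra element on `PreGNS` as a bounded operator. -/
def leftMul (a : A) : hB.PreGNS →L[ℂ] hB.PreGNS :=
  (Algebra.lsmul ℂ ℂ hB.PreGNS a).mkContinuous ‖a‖ (hB.norm_smul_le a)

@[simp]
lemma leftMul_apply (a : A) (x : hB.PreGNS) : hB.leftMul a x = a • x :=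
  rfl

/-- The representation of `A` on the Hilbert space of an invariant form. -/
def gnsStarAlgHom : A →⋆ₐ[ℂ] (hB.GNS →L[ℂ] hB.GNS) where
  toFun a := (hB.leftMul a).completion
  map_one' := clm_completion_ext fun x ↦ by simp
  map_mul' a b := clm_completion_ext fun x ↦ by simp [mul_smul]
  map_zero' := clm_completion_ext fun x ↦ by simp [Completion.coe_zero]
  map_add' a b := clm_completion_ext fun x ↦ by simp [add_smul, Completion.coe_add]
  commutes' c := clm_completion_ext fun x ↦ by simp [Algebra.algebraMap_eq_smul_one]
  map_star' a := by
    refine (ContinuousLinearMap.eq_adjoint_iff _ _).2 fun x y ↦ ?_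
    induction x, y using Completion.induction_on₂ with
    | hp => apply isClosed_eq <;> fun_prop
    | ih x y =>
      simp only [ContinuousLinearMap.completion_apply_coe, leftMul_apply, Completion.inner_coe]
      rw [inner_smul_left_preGNS, star_star]

lemma inner_toGNS_gnsStarAlgHom (a : A) (x y : E) :
    ⟪hB.toGNS x, hB.gnsStarAlgHom a (hB.toGNS y)⟫_ℂ = B x (a • y) :=
  (congrArg _ (ContinuousLinearMap.completion_apply_coe _ _)).trans (Completion.inner_coe _ _)

end IsInvariantForm

end GNS

section Dilation

variable {A : Type*} [CStarAlgebra A]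
  {H : Type*} [NormedAddCommGroup H] [InnerProductSpace ℂ H]

/-- The sesquilinear form on pairs of rows with diagonal blocks `opForm T₁`, `opForm T₂` and
off-diagonal block `(u, v) ↦ X (gram u v)`. -/
def pairForm (T₁ T₂ : A →ₗ[ℂ] (H →L[ℂ] H)) (X : (H × H →₀ A) →ₗ[ℂ] ℂ) :
    (H →₀ A) × (H →₀ A) →ₗ⋆[ℂ] (H →₀ A) × (H →₀ A) →ₗ[ℂ] ℂ :=
  LinearMap.mk₂'ₛₗ (starRingEnd ℂ) (RingHom.id ℂ)
    (fun p q ↦ opForm T₁ p.1 q.1 + X (gram p.1 q.2) + starRingEnd ℂ (X (gram q.1 p.2)) +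
      opForm T₂ p.2 q.2)
    (fun p q r ↦ by
      simp only [Prod.fst_add, Prod.snd_add, map_add, LinearMap.add_apply]
      ring)
    (fun c p q ↦ by
      simp only [Prod.smul_fst, Prod.smul_snd, LinearMap.map_smulₛₗ, LinearMap.smul_apply,
        map_smul, map_mul, smul_eq_mul]
      ring)
    (fun p q r ↦ by
      simp only [Prod.fst_add, Prod.snd_add, map_add, LinearMap.add_apply]
      ring)
    (fun c p q ↦ by
      simp only [Prod.smul_fst, Prod.smul_snd, LinearMap.map_smulₛₗ, LinearMap.smul_apply,
        map_smul, map_mul, smul_eq_mul, Complex.conj_conj, RingHom.id_apply]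
      ring)

lemma pairForm_apply (T₁ T₂ : A →ₗ[ℂ] (H →L[ℂ] H)) (X : (H × H →₀ A) →ₗ[ℂ] ℂ)
    (p q : (H →₀ A) × (H →₀ A)) :
    pairForm T₁ T₂ X p q = opForm T₁ p.1 q.1 + X (gram p.1 q.2) +
      starRingEnd ℂ (X (gram q.1 p.2)) + opForm T₂ p.2 q.2 :=
  rfl

variable {K : Type*} [NormedAddCommGroup K] [InnerProductSpace ℂ K]

lemma exists_continuousLinearMap_of_inner_eq {V : H → K} {G : H →L[ℂ] H}
    (hV : ∀ ξ η, ⟪V ξ, V η⟫_ℂ = ⟪ξ, G η⟫_ℂ) : ∃ W : H →L[ℂ] K, ∀ ξ, W ξ = V ξ := by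
  have h_add (ξ η : H) : V (ξ + η) = V ξ + V η := by
    rw [← sub_eq_zero, ← inner_self_eq_zero (𝕜 := ℂ)]
    simp only [inner_sub_left, inner_sub_right, inner_add_left, inner_add_right, hV, map_add]
    ring
  have h_smul (c : ℂ) (ξ : H) : V (c • ξ) = c • V ξ := by
    rw [← sub_eq_zero, ← inner_self_eq_zero (𝕜 := ℂ)]
    simp only [inner_sub_left, inner_sub_right, inner_smul_left, inner_smul_right, hV, map_smul]
    ring
  have h_sq (ξ : H) : ‖V ξ‖ ^ 2 ≤ (√‖G‖ * ‖ξ‖) ^ 2 := calc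
    ‖V ξ‖ ^ 2 = (⟪ξ, G ξ⟫_ℂ).re := by rw [norm_sq_eq_re_inner (𝕜 := ℂ), hV]; rfl
    _ ≤ ‖ξ‖ * ‖G ξ‖ := re_inner_le_norm (𝕜 := ℂ) ξ (G ξ)
    _ ≤ ‖ξ‖ * (‖G‖ * ‖ξ‖) := by gcongr; exact G.le_opNorm ξ
    _ = (√‖G‖ * ‖ξ‖) ^ 2 := by rw [mul_pow, Real.sq_sqrt (norm_nonneg G)]; ring
  exact ⟨LinearMap.mkContinuous ⟨⟨V, h_add⟩, h_smul⟩ √‖G‖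
    fun ξ ↦ (sq_le_sq₀ (norm_nonneg _) (by positivity)).1 (h_sq ξ), fun _ ↦ rfl⟩

variable [CompleteSpace H]

lemma isInvariantForm_pairForm {T₁ T₂ : A →ₗ[ℂ] (H →L[ℂ] H)}
    (hT₁ : ∀ a, T₁ (star a) = star (T₁ a)) (hT₂ : ∀ a, T₂ (star a) = star (T₂ a))
    {X : (H × H →₀ A) →ₗ[ℂ] ℂ}
    (hX : ∀ u v, 0 ≤ (opForm T₁ u u).re + (opForm T₂ v v).re + 2 * (X (gram u v)).re) :
    IsInvariantForm A (pairForm T₁ T₂ X) where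
  eq p q := by
    simp only [pairForm_apply, map_add, Complex.conj_conj, opForm_conj hT₁, opForm_conj hT₂]
    ring
  nonneg p := by
    have h₁ := Complex.conj_eq_iff_im.1 (opForm_conj hT₁ p.1 p.1)
    have h₂ := Complex.conj_eq_iff_im.1 (opForm_conj hT₂ p.2 p.2)
    refine Complex.nonneg_iff.2 ⟨(hX p.1 p.2).trans_eq ?_, ?_⟩
    · simp only [pairForm_apply, Complex.add_re, Complex.conj_re]
      ring
    · simp [pairForm_apply, h₁, h₂]
  smul_left a p q := by
    simp [pairForm_apply, opForm_smul_left, gram_smul_left]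

variable [CompleteSpace K]

lemma exists_isStinespring_of_inner_eq {T : A →ₗ[ℂ] (H →L[ℂ] H)} {π : A →⋆ₐ[ℂ] (K →L[ℂ] K)}
    {V : H → K} (hV : ∀ a ξ η, ⟪V ξ, π a (V η)⟫_ℂ = ⟪ξ, T a η⟫_ℂ) :
    ∃ W : H →L[ℂ] K, (∀ ξ, W ξ = V ξ) ∧ IsStinespring T (π : A →⋆ₙₐ[ℂ] (K →L[ℂ] K)) W := by
  obtain ⟨W, hW⟩ : ∃ W : H →L[ℂ] K, ∀ ξ, W ξ = V ξ :=
    exists_continuousLinearMap_of_inner_eq (G := T 1) fun ξ η ↦ by simp [← hV]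
  refine ⟨W, hW, fun a ↦ ContinuousLinearMap.ext fun η ↦ ext_inner_left ℂ fun ξ ↦ ?_⟩
  calc ⟪ξ, T a η⟫_ℂ = ⟪W ξ, π a (W η)⟫_ℂ := by rw [hW, hW, hV]
    _ = _ := (ContinuousLinearMap.adjoint_inner_right W ξ _).symm

lemma norm_sq_apply_of_isStinespring {T : A →ₗ[ℂ] (H →L[ℂ] H)} {π : A →⋆ₐ[ℂ] (K →L[ℂ] K)}
    {V : H →L[ℂ] K} (hV : IsStinespring T (π : A →⋆ₙₐ[ℂ] (K →L[ℂ] K)) V) (ξ : H) :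
    ‖V ξ‖ ^ 2 = (⟪ξ, T 1 ξ⟫_ℂ).re := by
  have h_one : T 1 = (ContinuousLinearMap.adjoint V).comp V := by
    rw [hV 1]
    ext
    simp
  rw [h_one, norm_sq_eq_re_inner (𝕜 := ℂ), ContinuousLinearMap.comp_apply,
    ContinuousLinearMap.adjoint_inner_right]
  rfl

variable {T₁ T₂ : A →ₗ[ℂ] (H →L[ℂ] H)} {α : ℝ}

lemma norm_sub_le_of_overlap_le {π : A →⋆ₐ[ℂ] (K →L[ℂ] K)} {V₁ V₂ : H →L[ℂ] K}
    (hV₁ : IsStinespring T₁ (π : A →⋆ₙₐ[ℂ] (K →L[ℂ] K)) V₁)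
    (hV₂ : IsStinespring T₂ (π : A →⋆ₙₐ[ℂ] (K →L[ℂ] K)) V₂) (hα : 0 ≤ α)
    (h : ∀ ξ, overlap T₁ T₂ α ξ ≤ 2 * (⟪V₁ ξ, V₂ ξ⟫_ℂ).re) : ‖V₁ - V₂‖ ≤ √α := by
  refine ContinuousLinearMap.opNorm_le_bound _ (Real.sqrt_nonneg α) fun ξ ↦ ?_
  rw [← sq_le_sq₀ (norm_nonneg _) (by positivity), mul_pow, Real.sq_sqrt hα]
  have hξ := h ξ
  rw [overlap, ← norm_sq_apply_of_isStinespring hV₁, ← norm_sq_apply_of_isStinespring hV₂] at hξ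
  have h_sub : ‖V₁ ξ - V₂ ξ‖ ^ 2 = ‖V₁ ξ‖ ^ 2 - 2 * (⟪V₁ ξ, V₂ ξ⟫_ℂ).re + ‖V₂ ξ‖ ^ 2 :=
    norm_sub_sq (𝕜 := ℂ) _ _
  rw [sub_apply, h_sub]
  linarith

theorem exists_isStinespring_pair {A : Type u} [CStarAlgebra A]
    {H : Type v} [NormedAddCommGroup H] [InnerProductSpace ℂ H] [CompleteSpace H]
    {T₁ T₂ : A →ₗ[ℂ] (H →L[ℂ] H)}
    (hT₁ : ∀ a, T₁ (star a) = star (T₁ a)) (hT₂ : ∀ a, T₂ (star a) = star (T₂ a))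
    {X : (H × H →₀ A) →ₗ[ℂ] ℂ}
    (hX : ∀ u v, 0 ≤ (opForm T₁ u u).re + (opForm T₂ v v).re + 2 * (X (gram u v)).re) :
    ∃ (K : Type (max u v)) (_ : NormedAddCommGroup K) (_ : InnerProductSpace ℂ K)
      (_ : CompleteSpace K) (π : A →⋆ₐ[ℂ] (K →L[ℂ] K)) (V₁ V₂ : H →L[ℂ] K),
      IsStinespring T₁ (π : A →⋆ₙₐ[ℂ] (K →L[ℂ] K)) V₁ ∧
      IsStinespring T₂ (π : A →⋆ₙₐ[ℂ] (K →L[ℂ] K)) V₂ ∧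
      ∀ ξ η, ⟪V₁ ξ, V₂ η⟫_ℂ = X (.single (ξ, η) 1) := by
  have hB : IsInvariantForm A (pairForm T₁ T₂ X) := isInvariantForm_pairForm hT₁ hT₂ hX
  let V₁ (ξ : H) : hB.GNS := hB.toGNS (.single ξ 1, 0)
  let V₂ (ξ : H) : hB.GNS := hB.toGNS (0, .single ξ 1)
  have h₁ (a : A) (ξ η : H) : ⟪V₁ ξ, hB.gnsStarAlgHom a (V₁ η)⟫_ℂ = ⟪ξ, T₁ a η⟫_ℂ := by
    simp [V₁, hB.inner_toGNS_gnsStarAlgHom, pairForm_apply, opForm_single_single]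
  have h₂ (a : A) (ξ η : H) : ⟪V₂ ξ, hB.gnsStarAlgHom a (V₂ η)⟫_ℂ = ⟪ξ, T₂ a η⟫_ℂ := by
    simp [V₂, hB.inner_toGNS_gnsStarAlgHom, pairForm_apply, opForm_single_single]
  have h₁₂ (ξ η : H) : ⟪V₁ ξ, V₂ η⟫_ℂ = X (.single (ξ, η) 1) := by
    simpa [V₁, V₂, pairForm_apply, gram_single_single] using
      hB.inner_toGNS_gnsStarAlgHom 1 (.single ξ 1, 0) (0, .single η 1)
  obtain ⟨W₁, hW₁, hW₁_dil⟩ := exists_isStinespring_of_inner_eq h₁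
  obtain ⟨W₂, hW₂, hW₂_dil⟩ := exists_isStinespring_of_inner_eq h₂
  exact ⟨hB.GNS, inferInstance, inferInstance, inferInstance, hB.gnsStarAlgHom, W₁, W₂, hW₁_dil,
    hW₂_dil, fun ξ η ↦ by rw [hW₁, hW₂, h₁₂]⟩

end Dilation

lemma cbNormLE_of_isCStarNorm {A : Type*} [CStarAlgebra A]
    {H : Type*} [NormedAddCommGroup H] [InnerProductSpace ℂ H] [CompleteSpace H]
    {T : A →ₗ[ℂ] (H →L[ℂ] H)} {α : ℝ} [PartialOrder A] [StarOrderedRing A]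
    {νA : ∀ n : ℕ, Matrix (Fin n) (Fin n) A → ℝ}
    {νB : ∀ n : ℕ, Matrix (Fin n) (Fin n) (H →L[ℂ] H) → ℝ}
    (hνA : ∀ n, IsCStarNorm (νA n)) (hνB : ∀ n, IsCStarNorm (νB n))
    (h : ∀ (n : ℕ) (x : Matrix (Fin n) (Fin n) A), νB n (x.map T) ≤ α * νA n x) :
    CBNormLE T α := fun n M ↦ by
  have hM := h n (CStarMatrix.ofMatrix.symm M)
  rwa [(hνA n).eq_norm_ofMatrix, (hνB n).eq_norm_ofMatrix] at hM

theorem stmt1 {A : Type u} [CStarAlgebra A]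
    {H : Type v} [NormedAddCommGroup H] [InnerProductSpace ℂ H] [CompleteSpace H]
    (T₁ T₂ : A →ₗ[ℂ] (H →L[ℂ] H)) (hT₁ : IsCPMap T₁) (hT₂ : IsCPMap T₂)
    (νA : ∀ n : ℕ, Matrix (Fin n) (Fin n) A → ℝ)
    (νB : ∀ n : ℕ, Matrix (Fin n) (Fin n) (H →L[ℂ] H) → ℝ)
    (hνA : ∀ n, IsCStarNorm (νA n)) (hνB : ∀ n, IsCStarNorm (νB n))
    (α : ℝ) (hα : 0 ≤ α)
    (hcb : ∀ (n : ℕ) (x : Matrix (Fin n) (Fin n) A),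
      νB n (x.map (fun a => T₁ a - T₂ a)) ≤ α * νA n x) :
    ∃ (K : Type (max u v)) (_ : NormedAddCommGroup K) (_ : InnerProductSpace ℂ K)
      (_ : CompleteSpace K) (π : A →⋆ₙₐ[ℂ] (K →L[ℂ] K)) (V₁ V₂ : H →L[ℂ] K),
      IsStinespring T₁ π V₁ ∧ IsStinespring T₂ π V₂ ∧ ‖V₁ - V₂‖ ≤ Real.sqrt α := by
  let _ := CStarAlgebra.spectralOrder A
  have _ := CStarAlgebra.spectralOrderedRing A
  have h_cb : CBNormLE (T₁ - T₂) α := cbNormLE_of_isCStarNorm hνA hνB hcb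
  obtain ⟨X, hX_nonneg, hX⟩ := exists_pairing hT₁ hT₂ hα h_cb
  obtain ⟨K, _, _, _, π, V₁, V₂, hV₁, hV₂, h_inner⟩ :=
    exists_isStinespring_pair hT₁.map_star hT₂.map_star hX_nonneg
  refine ⟨K, _, _, _, π, V₁, V₂, hV₁, hV₂, norm_sub_le_of_overlap_le hV₁ hV₂ hα fun ξ ↦ ?_⟩
  rw [h_inner]
  exact hX ξ
end
end

section
/- Let T1, T2 : A → B(H) be completely positive maps and let T̂ : A → M_2(B(H)) be a cp extension of (T1, T2), with matrix entries T̂_ij. Then there exists a common dilation (π, V1, K), (π, V2, K) of (T1, T2) such that ‖V1 − V2‖² = ‖T1(1) + T2(1) − T̂_12(1) − T̂_21(1)‖. -/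
noncomputable section

universe u v

open ContinuousLinearMap

open scoped InnerProductSpace TensorProduct

/-!
Gram matrices `(aₖ⋆aₗ)` are positive, so complete positivity makes `((a, i), (b, j)) ↦ T̂(a⋆b)ᵢⱼ` a
positive semidefinite kernel, the reproducing kernel of a Hilbert space `K`. Left multiplication on
the algebra variable of its kernel functions extends to a representation `π` of `A` on `K`; it is
bounded because `‖c‖² - c⋆c` is of the form `d⋆d`.
With `Vᵢ` the kernel function at `(1, i)`, every entry satisfies `T̂(a)ᵢⱼ = Vᵢ⋆ π(a) Vⱼ`. The
diagonal entries give the common dilation, and `(V₁ - V₂)⋆(V₁ - V₂)` is the operator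
`T₁(1) + T₂(1) - T̂₁₂(1) - T̂₂₁(1)`, so the norm formula is the C⋆-identity.
-/

universe w

section PositiveMatrices

variable {n ι R : Type*}

lemma posSemidef_of_finset_submatrix [Ring R] [PartialOrder R] [StarRing R] {M : Matrix n n R}
    (hM : ∀ s : Finset n, (M.submatrix ((↑) : s → n) (↑)).PosSemidef) : M.PosSemidef := by
  classical
  refine ⟨.ext fun i j ↦ ?_, fun x ↦ ?_⟩
  · exact (hM {i, j}).isHermitian.apply ⟨i, by simp⟩ ⟨j, by simp⟩
  · have hx := (hM x.support).2 (x.subtypeDomain (· ∈ x.support))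
    simp only [Finsupp.sum, Finsupp.support_subtypeDomain, Finset.subtype_mem_eq_attach,
      Finsupp.subtypeDomain_apply, Matrix.submatrix_apply] at hx ⊢
    rw [← Finset.sum_attach]
    simpa only [← Finset.sum_attach x.support (fun j ↦ star (x _) * M _ j * x j)] using hx

lemma posSemidef_comp_star_mul_self [Fintype n] [Fintype ι] [Ring R] [PartialOrder R] [StarRing R]
    [StarOrderedRing R] (Z : Matrix n n (Matrix ι ι R)) :
    (Matrix.comp n n ι ι R (star Z * Z)).PosSemidef := by
  have h : Matrix.comp n n ι ι R (star Z * Z) =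
      (Matrix.comp n n ι ι R Z).conjTranspose * Matrix.comp n n ι ι R Z :=
    map_mul (Matrix.compRingEquiv n ι R) (star Z) Z
  exact h ▸ Matrix.posSemidef_conjTranspose_mul_self _

end PositiveMatrices

section CompletelyPositive

variable {n ι A B : Type*}

/-- The Gram kernel `((a, i), (b, j)) ↦ T(a⋆b)ᵢⱼ` of a matrix-valued map `T`, whose reproducing
kernel Hilbert space carries the Stinespring dilation of `T`. -/
def gramKernel [Mul A] [Star A] (T : A → Matrix ι ι B) : Matrix (A × ι) (A × ι) B :=
  .of fun p q ↦ T (star p.1 * q.1) p.2 q.2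

@[simp]
lemma gramKernel_apply [Mul A] [Star A] (T : A → Matrix ι ι B) (p q : A × ι) :
    gramKernel T p q = T (star p.1 * q.1) p.2 q.2 := rfl

variable [NonUnitalSemiring A] [StarRing A]

lemma IsCPMap.exists_map_eq_star_mul_self [NonUnitalSemiring B] [StarRing B] [Fintype n]
    {T : A → B} (hT : IsCPMap T) (y : Matrix n n A) :
    ∃ z : Matrix n n B, (star y * y).map T = star z * z := by
  let e := Fintype.equivFin n
  obtain ⟨z, hz⟩ := hT _ _ ⟨y.submatrix e.symm e.symm, rfl⟩
  refine ⟨z.submatrix e e, ?_⟩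
  simp only [Matrix.star_eq_conjTranspose, Matrix.conjTranspose_submatrix,
    Matrix.submatrix_mul_equiv] at hz ⊢
  rw [← hz]
  ext
  simp

lemma IsCPMap.exists_gram_eq_star_mul_self [NonUnitalSemiring B] [StarRing B] [Fintype n]
    {T : A → B} (hT : IsCPMap T) (a : n → A) :
    ∃ z : Matrix n n B, (.of fun k l ↦ T (star (a k) * a l)) = star z * z := by
  classical
  obtain _ | ⟨⟨i₀⟩⟩ := isEmpty_or_nonempty n
  · exact ⟨0, Subsingleton.elim _ _⟩
  · -- The Gram matrix of `a` is `y⋆ y` for the square matrix `y` whose only nonzero row is `a`.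
    obtain ⟨z, hz⟩ := hT.exists_map_eq_star_mul_self (.of fun i k ↦ if i = i₀ then a k else 0)
    refine ⟨z, hz ▸ ?_⟩
    ext
    simp [Matrix.mul_apply, Matrix.star_apply]

lemma IsCPMap.posSemidef_gramKernel [Fintype ι] [Ring B] [PartialOrder B] [StarRing B]
    [StarOrderedRing B] {T : A → Matrix ι ι B} (hT : IsCPMap T) :
    (gramKernel T).PosSemidef := by
  refine posSemidef_of_finset_submatrix fun s ↦ ?_
  obtain ⟨z, hz⟩ := hT.exists_gram_eq_star_mul_self fun p : s ↦ p.1.1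
  exact (hz ▸ posSemidef_comp_star_mul_self z).submatrix fun p : s ↦ (p, p.1.2)

end CompletelyPositive

section Representation

variable {A : Type*} [CStarAlgebra A]

lemma exists_norm_sq_smul_one_eq_add (c : A) :
    ∃ d : A, ((‖c‖ : ℂ) ^ 2) • (1 : A) = star c * c + star d * d := by
  let _ : PartialOrder A := CStarAlgebra.spectralOrder A
  have _ : StarOrderedRing A := CStarAlgebra.spectralOrderedRing A
  have hle : star c * c ≤ algebraMap ℝ A ‖star c * c‖ :=
    IsSelfAdjoint.le_algebraMap_norm_self (.star_mul_self c)
  obtain ⟨d, hd⟩ := CStarAlgebra.nonneg_iff_eq_star_mul_self.mp (sub_nonneg.mpr hle)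
  refine ⟨d, ?_⟩
  rw [← hd, CStarRing.norm_star_mul_self, add_sub_cancel, Algebra.algebraMap_eq_smul_one, ← sq,
    ← Complex.ofReal_pow, Complex.coe_smul]

variable {E : Type*} [AddCommGroup E] [Module ℂ E] [Module A E] [IsScalarTower ℂ A E]
  {K : Type*} [NormedAddCommGroup K] [InnerProductSpace ℂ K]

lemma norm_map_smul_le_of_inner {e : E →ₗ[ℂ] K}
    (he : ∀ (c : A) x y, ⟪e (c • x), e y⟫_ℂ = ⟪e x, e (star c • y)⟫_ℂ) (c : A) (x : E) :
    ‖e (c • x)‖ ≤ ‖c‖ * ‖e x‖ := by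
  obtain ⟨d, hd⟩ := exists_norm_sq_smul_one_eq_add c
  have inner_self (a : A) : ⟪e x, e ((star a * a) • x)⟫_ℂ = (‖e (a • x)‖ : ℂ) ^ 2 := by
    rw [mul_smul, ← he, inner_self_eq_norm_sq_to_K]
    rfl
  have hsum : ‖c‖ ^ 2 * ‖e x‖ ^ 2 = ‖e (c • x)‖ ^ 2 + ‖e (d • x)‖ ^ 2 := by
    have h : ⟪e x, e (((‖c‖ : ℂ) ^ 2 • (1 : A)) • x)⟫_ℂ =
        ⟪e x, e ((star c * c + star d * d) • x)⟫_ℂ := by rw [hd]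
    rw [smul_assoc, one_smul, map_smul, inner_smul_right, inner_self_eq_norm_sq_to_K, add_smul,
      map_add, inner_add_right, inner_self, inner_self] at h
    exact Complex.ofReal_injective (by push_cast; exact h)
  refine le_of_sq_le_sq ?_ (by positivity)
  rw [mul_pow, hsum]
  exact le_add_of_nonneg_right (sq_nonneg _)

variable [CompleteSpace K]

theorem exists_starAlgHom_of_denseRange {e : E →ₗ[ℂ] K} (hdense : DenseRange e)
    (he : ∀ (c : A) x y, ⟪e (c • x), e y⟫_ℂ = ⟪e x, e (star c • y)⟫_ℂ) :
    ∃ π : A →⋆ₐ[ℂ] (K →L[ℂ] K), ∀ c x, π c (e x) = e (c • x) := by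
  have hex (c : A) : ∃ P : K →L[ℂ] K, ∀ x, P (e x) = e (c • x) :=
    ⟨(e ∘ₗ Algebra.lsmul ℂ ℂ E c).extendOfNorm e,
      LinearMap.extendOfNorm_eq hdense ⟨‖c‖, norm_map_smul_le_of_inner he c⟩⟩
  choose P hP using hex
  have ext_range {S S' : K →L[ℂ] K} (h : ∀ x, S (e x) = S' (e x)) : S = S' :=
    DFunLike.coe_injective (hdense.equalizer S.continuous S'.continuous (funext h))
  refine ⟨{
    toFun := P
    map_one' := ext_range fun x ↦ by simp [hP]
    map_mul' := fun c d ↦ ext_range fun x ↦ by simp [hP, mul_smul]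
    map_zero' := ext_range fun x ↦ by simp [hP]
    map_add' := fun c d ↦ ext_range fun x ↦ by simp [hP, add_smul]
    commutes' := fun r ↦ ext_range fun x ↦ by simp [hP, Algebra.algebraMap_eq_smul_one]
    map_star' := fun c ↦ ?_ }, hP⟩
  refine (eq_adjoint_iff _ _).mpr fun x y ↦ ?_
  refine hdense.induction_on₂ (isClosed_eq (by fun_prop) (by fun_prop)) (fun x y ↦ ?_) x y
  rw [hP, hP, he, star_star]

end Representation

section Stinespring

variable {A : Type*} [Semiring A] [StarRing A] [Algebra ℂ A] {ι : Type*}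
  {H : Type*} [NormedAddCommGroup H] [InnerProductSpace ℂ H] [CompleteSpace H]
  (T : A →ₗ[ℂ] Matrix ι ι (H →L[ℂ] H)) [Fact (gramKernel T).PosSemidef]

/-- The space of the Stinespring dilation of `T`, encoded as the reproducing kernel Hilbert space of
`gramKernel T`. Its kernel function at `(a, i)` plays the role of `v ↦ π(a) Vᵢ v`. -/
abbrev DilationSpace := RKHS.OfKernel (gramKernel T)

lemma kerFun_dilationSpace_add (a b : A) (i : ι) :
    RKHS.kerFun (DilationSpace T) (a + b, i) =
      RKHS.kerFun (DilationSpace T) (a, i) + RKHS.kerFun (DilationSpace T) (b, i) := by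
  ext v q
  simp [RKHS.kerFun_apply, mul_add]

lemma kerFun_dilationSpace_smul (r : ℂ) (a : A) (i : ι) :
    RKHS.kerFun (DilationSpace T) (r • a, i) = r • RKHS.kerFun (DilationSpace T) (a, i) := by
  ext v q
  simp [RKHS.kerFun_apply]

variable [Fintype ι]

/-- The canonical map `a ⊗ v ↦ ∑ᵢ π(a) Vᵢ vᵢ` with dense range that carries left multiplication on
`A` over to the representation `π`. -/
def tensorToDilationSpace : A ⊗[ℂ] (ι → H) →ₗ[ℂ] DilationSpace T :=
  TensorProduct.lift <| LinearMap.mk₂ ℂ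
    (fun a v ↦ ∑ i, RKHS.kerFun (DilationSpace T) (a, i) (v i))
    (fun a b v ↦ by simp [Finset.sum_add_distrib, kerFun_dilationSpace_add])
    (fun r a v ↦ by simp [Finset.smul_sum, kerFun_dilationSpace_smul])
    (fun a v w ↦ by simp [Finset.sum_add_distrib])
    (fun r a v ↦ by simp [Finset.smul_sum])

@[simp]
lemma tensorToDilationSpace_tmul (a : A) (v : ι → H) :
    tensorToDilationSpace T (a ⊗ₜ v) = ∑ i, RKHS.kerFun (DilationSpace T) (a, i) (v i) := rfl

lemma tensorToDilationSpace_tmul_single [DecidableEq ι] (a : A) (i : ι) (v : H) :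
    tensorToDilationSpace T (a ⊗ₜ Pi.single i v) = RKHS.kerFun (DilationSpace T) (a, i) v := by
  rw [tensorToDilationSpace_tmul, Fintype.sum_eq_single i, Pi.single_eq_same]
  intro j hj
  rw [Pi.single_eq_of_ne hj, map_zero]

lemma denseRange_tensorToDilationSpace : DenseRange (tensorToDilationSpace T) := by
  classical
  refine (Submodule.dense_iff_topologicalClosure_eq_top.mpr (RKHS.kerFun_dense _)).mono ?_
  rw [← LinearMap.coe_range, SetLike.coe_subset_coe, Submodule.span_le]
  rintro _ ⟨⟨a, i⟩, v, rfl⟩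
  exact ⟨_, tensorToDilationSpace_tmul_single T a i v⟩

lemma inner_tensorToDilationSpace_tmul (a b : A) (v w : ι → H) :
    ⟪tensorToDilationSpace T (a ⊗ₜ v), tensorToDilationSpace T (b ⊗ₜ w)⟫_ℂ =
      ∑ i, ∑ j, ⟪T (star b * a) i j (v j), w i⟫_ℂ := by
  simp only [tensorToDilationSpace_tmul, sum_inner, inner_sum, ← RKHS.kernel_inner,
    RKHS.OfKernel.kernel_ofKernel, gramKernel_apply]

lemma inner_tensorToDilationSpace_smul (c : A) (x y : A ⊗[ℂ] (ι → H)) :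
    ⟪tensorToDilationSpace T (c • x), tensorToDilationSpace T y⟫_ℂ =
      ⟪tensorToDilationSpace T x, tensorToDilationSpace T (star c • y)⟫_ℂ := by
  induction x with
  | zero => simp
  | add x₁ x₂ h₁ h₂ => simp [inner_add_left, h₁, h₂]
  | tmul a v =>
    induction y with
    | zero => simp
    | add y₁ y₂ h₁ h₂ => simp only [smul_add, map_add, inner_add_right, h₁, h₂]
    | tmul b w =>
      simp only [TensorProduct.smul_tmul', smul_eq_mul, inner_tensorToDilationSpace_tmul, star_mul,
        star_star, mul_assoc]

end Stinespring

theorem IsCPMap.exists_matrix_stinespring {A : Type u} [CStarAlgebra A] {ι : Type w} [Fintype ι]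
    {H : Type v} [NormedAddCommGroup H] [InnerProductSpace ℂ H] [CompleteSpace H]
    {T : A →ₗ[ℂ] Matrix ι ι (H →L[ℂ] H)} (hT : IsCPMap T) :
    ∃ (K : Type (max u v w)) (_ : NormedAddCommGroup K) (_ : InnerProductSpace ℂ K)
      (_ : CompleteSpace K) (π : A →⋆ₐ[ℂ] (K →L[ℂ] K)) (V : ι → H →L[ℂ] K),
      ∀ a i j, T a i j = adjoint (V i) ∘L π a ∘L V j := by
  classical
  have : Fact (gramKernel T).PosSemidef := ⟨hT.posSemidef_gramKernel⟩
  let K := DilationSpace T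
  obtain ⟨π, hπ⟩ := exists_starAlgHom_of_denseRange (denseRange_tensorToDilationSpace T)
    (inner_tensorToDilationSpace_smul T)
  have hV (a : A) (j : ι) : π a ∘L RKHS.kerFun K (1, j) = RKHS.kerFun K (a, j) := by
    ext1 v
    rw [comp_apply, ← tensorToDilationSpace_tmul_single, hπ, TensorProduct.smul_tmul', smul_eq_mul,
      mul_one, tensorToDilationSpace_tmul_single]
  refine ⟨K, inferInstance, inferInstance, inferInstance, π, fun i ↦ RKHS.kerFun K (1, i),
    fun a i j ↦ ?_⟩
  rw [hV, ← RKHS.kernel_apply, RKHS.OfKernel.kernel_ofKernel, gramKernel_apply, star_one, one_mul]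

lemma norm_sub_sq_eq_norm_adjoint_comp {𝕜 E F : Type*} [RCLike 𝕜]
    [NormedAddCommGroup E] [InnerProductSpace 𝕜 E] [CompleteSpace E]
    [NormedAddCommGroup F] [InnerProductSpace 𝕜 F] [CompleteSpace F] (V W : E →L[𝕜] F) :
    ‖V - W‖ ^ 2 =
      ‖adjoint V ∘L V + adjoint W ∘L W - adjoint V ∘L W - adjoint W ∘L V‖ := by
  rw [sq, ← norm_adjoint_comp_self, map_sub, sub_comp, comp_sub, comp_sub]
  congr 1
  abel

theorem stmt6 {A : Type u} [CStarAlgebra A]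
    {H : Type v} [NormedAddCommGroup H] [InnerProductSpace ℂ H] [CompleteSpace H]
    (T₁ T₂ : A →ₗ[ℂ] (H →L[ℂ] H)) (hT₁ : IsCPMap T₁) (hT₂ : IsCPMap T₂)
    -- a cp extension `T̂` of `(T₁, T₂)`
    (That : A →ₗ[ℂ] Matrix (Fin 2) (Fin 2) (H →L[ℂ] H)) (hThat : IsCPMap That)
    (h11 : ∀ a : A, That a 0 0 = T₁ a) (h22 : ∀ a : A, That a 1 1 = T₂ a) :
    ∃ (K : Type (max u v)) (_ : NormedAddCommGroup K) (_ : InnerProductSpace ℂ K)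
      (_ : CompleteSpace K) (π : A →⋆ₙₐ[ℂ] (K →L[ℂ] K)) (V₁ V₂ : H →L[ℂ] K),
      IsStinespring T₁ π V₁ ∧ IsStinespring T₂ π V₂ ∧
      ‖V₁ - V₂‖ ^ 2 = ‖T₁ 1 + T₂ 1 - That 1 0 1 - That 1 1 0‖ := by
  obtain ⟨K, _, _, _, π, V, hV⟩ := hThat.exists_matrix_stinespring
  have hV_one (i j : Fin 2) : adjoint (V i) ∘L V j = That 1 i j := by
    rw [hV, map_one]
    rfl
  refine ⟨K, inferInstance, inferInstance, inferInstance, π, V 0, V 1, fun a ↦ ?_, fun a ↦ ?_, ?_⟩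
  · exact (h11 a).symm.trans (hV a 0 0)
  · exact (h22 a).symm.trans (hV a 1 1)
  · simp only [norm_sub_sq_eq_norm_adjoint_comp, hV_one, h11, h22]
end
end

section
/- Let T1, T2, T3 : A → B(H) be completely positive maps. Suppose (π, V1, K), (π, V2, K) is a common dilation of (T1, T2) and (π̌, V̌2, Ǩ), (π̌, V̌3, Ǩ) is a common dilation of (T2, T3). Then there exist a complex Hilbert space L, a *-homomorphism ρ : A → B(L), and bounded operators W1, W3 : H → L such that (ρ, W1, L), (ρ, W3, L) is a common dilation of (T1, T3) and ‖W1 − W3‖ ≤ ‖V1 − V2‖ + ‖V̌2 − V̌3‖ (triangle inequality for the Bures distance). -/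
/-!
The two dilations of `T₂` have generating families `π a (V₂ h)` and `π' a (V₂' h)` with the same
Gram matrix, so `π' a (V₂' h) ↦ π a (V₂ h)` extends to a partial isometry `w : K' → K`
intertwining `π'` and `π`. If `Q` is the projection onto the orthogonal complement of its initial
space, then `J = (w, Q) : K' → K ⊕ K'` is an isometry intertwining `π'` and `π ⊕ π'`, and it carries
`V₂'` to `(V₂, 0)`. Hence `(V₁, 0)` and `J V₃'` dilate `T₁` and `T₃` to `π ⊕ π'`, and the triangle
inequality through `(V₂, 0) = J V₂'` gives the bound.

Because `π` and `π'` may be degenerate, `V₂` need not map into the cyclic space of the dilation;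
all `Vᵢ` are therefore first projected onto the orthogonal complement of the vectors annihilated by
the representation, which changes no dilated map and increases no distance.
-/

noncomputable section

universe u v w w'

open ContinuousLinearMap Submodule
open scoped InnerProductSpace

section Hilbert

variable {𝕜 : Type*} [RCLike 𝕜]
  {E : Type*} [NormedAddCommGroup E] [InnerProductSpace 𝕜 E]
  {F : Type*} [NormedAddCommGroup F] [InnerProductSpace 𝕜 F]
  {G : Type*} [NormedAddCommGroup G] [InnerProductSpace 𝕜 G]

theorem norm_linearCombination_eq_of_gram_eq {ι : Type*} {f : ι → E} {g : ι → F}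
    (h : Matrix.gram 𝕜 f = Matrix.gram 𝕜 g) (c : ι →₀ 𝕜) :
    ‖Finsupp.linearCombination 𝕜 g c‖ = ‖Finsupp.linearCombination 𝕜 f c‖ := by
  have h_inner (i j : ι) : ⟪f i, f j⟫_𝕜 = ⟪g i, g j⟫_𝕜 := congr_fun₂ h i j
  simp only [@norm_eq_sqrt_re_inner 𝕜, Finsupp.linearCombination_apply, Finsupp.sum_inner,
    Finsupp.inner_sum, inner_smul_left, inner_smul_right, h_inner]

theorem exists_linearIsometry_of_gram_eq [CompleteSpace F] {ι : Type*} {f : ι → E} {g : ι → F}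
    (h : Matrix.gram 𝕜 f = Matrix.gram 𝕜 g) :
    ∃ U : (span 𝕜 (Set.range f)).topologicalClosure →ₗᵢ[𝕜] F,
      ∀ i (hi : f i ∈ (span 𝕜 (Set.range f)).topologicalClosure), U ⟨f i, hi⟩ = g i := by
  set M := (span 𝕜 (Set.range f)).topologicalClosure with hM
  have h_mem (c : ι →₀ 𝕜) : Finsupp.linearCombination 𝕜 f c ∈ M :=
    le_topologicalClosure _
      (Finsupp.range_linearCombination 𝕜 (v := f) ▸ LinearMap.mem_range_self _ c)
  let e : (ι →₀ 𝕜) →ₗ[𝕜] M := (Finsupp.linearCombination 𝕜 f).codRestrict M h_mem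
  have h_dense : DenseRange e := by
    rintro ⟨x, hx⟩
    rw [closure_subtype, ← Set.range_comp]
    rwa [hM, ← Finsupp.range_linearCombination] at hx
  have h_norm (c : ι →₀ 𝕜) : ‖Finsupp.linearCombination 𝕜 g c‖ = ‖e c‖ :=
    norm_linearCombination_eq_of_gram_eq h c
  let S : M →L[𝕜] F := (Finsupp.linearCombination 𝕜 g).extendOfNorm e
  have hS (c : ι →₀ 𝕜) : S (e c) = Finsupp.linearCombination 𝕜 g c :=
    LinearMap.extendOfNorm_eq h_dense ⟨1, fun c ↦ by rw [h_norm, one_mul]⟩ c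
  have hS_norm (x : M) : ‖S x‖ = ‖x‖ := by
    refine h_dense.induction_on (p := fun x ↦ ‖S x‖ = ‖x‖) x
      (isClosed_eq (by fun_prop) (by fun_prop)) fun c ↦ ?_
    rw [hS, h_norm]
  refine ⟨⟨S.toLinearMap, hS_norm⟩, fun i hi ↦ ?_⟩
  have he : e (Finsupp.single i 1) = ⟨f i, hi⟩ := Subtype.ext (by simp [e])
  simpa [he] using hS (Finsupp.single i 1)

theorem exists_partialIsometry_of_gram_eq [CompleteSpace E] [CompleteSpace F] {ι : Type*}
    {f : ι → E} {g : ι → F} (h : Matrix.gram 𝕜 f = Matrix.gram 𝕜 g) :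
    ∃ w : E →L[𝕜] F, (∀ i, w (f i) = g i) ∧
      ∀ x, ‖w x‖ = ‖(span 𝕜 (Set.range f)).topologicalClosure.starProjection x‖ := by
  obtain ⟨U, hU⟩ := exists_linearIsometry_of_gram_eq h
  refine ⟨U.toContinuousLinearMap ∘L orthogonalProjectionOnto _, fun i ↦ ?_, fun x ↦ ?_⟩
  · have hi : f i ∈ (span 𝕜 (Set.range f)).topologicalClosure :=
      le_topologicalClosure _ (subset_span ⟨i, rfl⟩)
    simpa [orthogonalProjectionOnto_mem_subspace_eq_self ⟨f i, hi⟩] using hU i hi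
  · exact U.norm_map _

theorem apply_starProjection_of_norm_eq {w : E →L[𝕜] F} {M : Submodule 𝕜 E}
    [M.HasOrthogonalProjection] (hw : ∀ x, ‖w x‖ = ‖M.starProjection x‖) (x : E) :
    w (M.starProjection x) = w x := by
  have h_zero : ‖w (x - M.starProjection x)‖ = 0 := by
    rw [hw, norm_eq_zero, starProjection_apply_eq_zero_iff]
    exact sub_starProjection_mem_orthogonal x
  rw [norm_eq_zero, map_sub, sub_eq_zero] at h_zero
  exact h_zero.symm

/-- The isometry `x ↦ (S x, R x)` into the Hilbert sum, for operators with `S⋆S + R⋆R = 1`. -/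
def isometryProd (S : G →L[𝕜] E) (R : G →L[𝕜] F) (h : ∀ x, ‖S x‖ ^ 2 + ‖R x‖ ^ 2 = ‖x‖ ^ 2) :
    G →ₗᵢ[𝕜] WithLp 2 (E × F) where
  toLinearMap := (WithLp.linearEquiv 2 𝕜 (E × F)).symm.toLinearMap ∘ₗ (S.prod R).toLinearMap
  norm_map' x := by
    rw [← sq_eq_sq₀ (norm_nonneg _) (norm_nonneg _), WithLp.prod_norm_sq_eq_of_L2]
    exact h x

theorem isometryProd_apply (S : G →L[𝕜] E) (R : G →L[𝕜] F)
    (h : ∀ x, ‖S x‖ ^ 2 + ‖R x‖ ^ 2 = ‖x‖ ^ 2) (x : G) :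
    isometryProd S R h x = WithLp.toLp 2 (S x, R x) :=
  rfl

theorem norm_starProjection_comp_sub_le (M : Submodule 𝕜 E) [M.HasOrthogonalProjection]
    (V W : F →L[𝕜] E) : ‖M.starProjection ∘L V - M.starProjection ∘L W‖ ≤ ‖V - W‖ := by
  rw [← comp_sub]
  exact (opNorm_comp_le _ _).trans (mul_le_of_le_one_left (norm_nonneg _) M.starProjection_norm_le)

end Hilbert

section Representation

variable {𝕜 : Type*} [RCLike 𝕜]
  {A : Type*} [NonUnitalNonAssocSemiring A] [DistribMulAction 𝕜 A] [Star A]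
  {K : Type*} [NormedAddCommGroup K] [InnerProductSpace 𝕜 K] [CompleteSpace K]
  {K' : Type*} [NormedAddCommGroup K'] [InnerProductSpace 𝕜 K'] [CompleteSpace K']
  (π : A →⋆ₙₐ[𝕜] (K →L[𝕜] K)) (π' : A →⋆ₙₐ[𝕜] (K' →L[𝕜] K'))

theorem adjoint_representation (a : A) : adjoint (π a) = π (star a) :=
  (map_star π a).symm

theorem inner_representation_left (a : A) (x y : K) : ⟪π a x, y⟫_𝕜 = ⟪x, π (star a) y⟫_𝕜 := by
  rw [← adjoint_representation, adjoint_inner_right]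

theorem commute_starProjection_of_invariant {M : Submodule 𝕜 K} [M.HasOrthogonalProjection]
    (hM : ∀ a, M ∈ Module.End.invtSubmodule (π a).toLinearMap) (a : A) :
    Commute M.starProjection (π a) := by
  refine (ContinuousLinearMap.IsIdempotentElem.commute_iff
    M.isIdempotentElem_starProjection).mpr ⟨?_, ?_⟩
  · simpa only [range_starProjection] using hM a
  · rw [ker_starProjection]
    exact orthogonal_mem_invtSubmodule (adjoint_representation π a ▸ hM (star a))

/-- The direct sum `π ⊕ π'` acting on the Hilbert sum of the two representation spaces. -/
def directSumRepresentation : A →⋆ₙₐ[𝕜] (WithLp 2 (K × K') →L[𝕜] WithLp 2 (K × K')) where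
  toFun a := (WithLp.prodContinuousLinearEquiv 2 𝕜 K K').symm.toContinuousLinearMap ∘L
    ((π a).prodMap (π' a)) ∘L (WithLp.prodContinuousLinearEquiv 2 𝕜 K K').toContinuousLinearMap
  map_smul' c a := by ext x; simp [WithLp.ext_iff, Prod.ext_iff]
  map_zero' := by ext x; simp [Prod.ext_iff]
  map_add' a b := by ext x; simp [WithLp.ext_iff, Prod.ext_iff]
  map_mul' a b := by ext x; simp [Prod.ext_iff]
  map_star' a := by
    rw [star_eq_adjoint, eq_adjoint_iff]
    intro x y
    simp [WithLp.prod_inner_apply, ← adjoint_representation, adjoint_inner_left]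

theorem directSumRepresentation_apply_toLp (a : A) (x : K) (y : K') :
    directSumRepresentation π π' a (WithLp.toLp 2 (x, y)) = WithLp.toLp 2 (π a x, π' a y) :=
  rfl

/-- The essential subspace of a representation: the orthogonal complement of the vectors that it
annihilates, equivalently the closed span of the ranges of its operators. -/
abbrev essentialSubspace : Submodule 𝕜 K := (⨅ a, (π a).ker)ᗮ

theorem apply_mem_essentialSubspace (a : A) (x : K) : π a x ∈ essentialSubspace π := by
  refine (mem_orthogonal' _ _).mpr fun y hy ↦ ?_
  have hy_zero : π (star a) y = 0 := (mem_iInf _).mp hy (star a)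
  rw [inner_representation_left, hy_zero, inner_zero_right]

theorem apply_starProjection_essentialSubspace (a : A) (x : K) :
    π a ((essentialSubspace π).starProjection x) = π a x := by
  have h_fixed (b : A) : (essentialSubspace π).starProjection ∘L π b = π b :=
    ContinuousLinearMap.ext fun y ↦
      starProjection_eq_self_iff.mpr (apply_mem_essentialSubspace π b y)
  have h_comm := commute_starProjection_of_invariant π
    (M := essentialSubspace π) (fun b y _ ↦ apply_mem_essentialSubspace π b y) a
  exact congr($(h_comm.eq.symm.trans (h_fixed a)) x)

variable {π} in
theorem eq_of_forall_apply_eq_of_mem_essentialSubspace {x y : K} (hx : x ∈ essentialSubspace π)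
    (hy : y ∈ essentialSubspace π) (h : ∀ a, π a x = π a y) : x = y := by
  have h_ker : x - y ∈ ⨅ a, (π a).ker := (mem_iInf _).mpr fun a ↦ by simp [h a]
  exact sub_eq_zero.mp ((orthogonal_disjoint _).le_bot ⟨h_ker, sub_mem hx hy⟩)

section Cyclic

variable {H : Type*} [NormedAddCommGroup H] [InnerProductSpace 𝕜 H] (V : H →L[𝕜] K)

/-- The closed subspace generated by the vectors `π a (V h)`, which carries the minimal part of a
Stinespring dilation `(π, V, K)`. -/
abbrev cyclicSubspace : Submodule 𝕜 K :=
  (span 𝕜 (Set.range fun p : A × H ↦ π p.1 (V p.2))).topologicalClosure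

theorem apply_mem_cyclicSubspace (a : A) (h : H) : π a (V h) ∈ cyclicSubspace π V :=
  le_topologicalClosure _ (subset_span ⟨(a, h), rfl⟩)

theorem cyclicSubspace_le_essentialSubspace : cyclicSubspace π V ≤ essentialSubspace π := by
  refine topologicalClosure_minimal _ (span_le.mpr ?_) (isClosed_orthogonal _)
  rintro _ ⟨⟨a, h⟩, rfl⟩
  exact apply_mem_essentialSubspace π a (V h)

theorem cyclicSubspace_mem_invtSubmodule (a : A) :
    cyclicSubspace π V ∈ Module.End.invtSubmodule (π a).toLinearMap := by
  refine topologicalClosure_mem_invtSubmodule (span_le.mpr ?_)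
  rintro _ ⟨⟨b, h⟩, rfl⟩
  exact subset_span ⟨(a * b, h), by simp⟩

theorem commute_starProjection_cyclicSubspace (a : A) :
    Commute (cyclicSubspace π V).starProjection (π a) :=
  commute_starProjection_of_invariant π (cyclicSubspace_mem_invtSubmodule π V) a

variable {π V} in
theorem mem_cyclicSubspace_of_mem_essentialSubspace {h : H} (hV : V h ∈ essentialSubspace π) :
    V h ∈ cyclicSubspace π V := by
  refine starProjection_eq_self_iff.mp (eq_of_forall_apply_eq_of_mem_essentialSubspace
    (cyclicSubspace_le_essentialSubspace π V (starProjection_apply_mem _ _)) hV fun a ↦ ?_)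
  calc π a ((cyclicSubspace π V).starProjection (V h))
      = (cyclicSubspace π V).starProjection (π a (V h)) :=
        congr($((commute_starProjection_cyclicSubspace π V a).eq.symm) (V h))
    _ = π a (V h) := starProjection_eq_self_iff.mpr (apply_mem_cyclicSubspace π V a h)

variable {π π' V} in
theorem apply_eq_of_intertwines {V' : H →L[𝕜] K'} {w : K' →L[𝕜] K}
    (hw : ∀ a h, w (π' a (V' h)) = π a (V h)) (hw_rep : ∀ a x, w (π' a x) = π a (w x)) {h : H}
    (hV : V h ∈ essentialSubspace π) (hV' : V' h ∈ essentialSubspace π') : w (V' h) = V h := by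
  have h_maps : cyclicSubspace π' V' ≤ (cyclicSubspace π V).comap w.toLinearMap := by
    refine topologicalClosure_minimal _ (span_le.mpr ?_)
      ((isClosed_topologicalClosure _).preimage w.continuous)
    rintro _ ⟨⟨a, k⟩, rfl⟩
    change w (π' a (V' k)) ∈ cyclicSubspace π V
    exact hw a k ▸ apply_mem_cyclicSubspace π V a k
  refine eq_of_forall_apply_eq_of_mem_essentialSubspace (cyclicSubspace_le_essentialSubspace π V
    (h_maps (mem_cyclicSubspace_of_mem_essentialSubspace hV'))) hV fun a ↦ ?_
  rw [← hw_rep, hw]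

end Cyclic

end Representation

section Dilation

variable {𝕜 : Type*} [RCLike 𝕜]
  {A : Type*} [NonUnitalNonAssocSemiring A] [DistribMulAction 𝕜 A] [Star A]
  {H : Type*} [NormedAddCommGroup H] [InnerProductSpace 𝕜 H] [CompleteSpace H]
  {K : Type*} [NormedAddCommGroup K] [InnerProductSpace 𝕜 K] [CompleteSpace K]
  {K' : Type*} [NormedAddCommGroup K'] [InnerProductSpace 𝕜 K'] [CompleteSpace K']
  {L : Type*} [NormedAddCommGroup L] [InnerProductSpace 𝕜 L] [CompleteSpace L]
  {T T₁ T₂ T₃ : A → H →L[𝕜] H} {π : A →⋆ₙₐ[𝕜] (K →L[𝕜] K)} {π' : A →⋆ₙₐ[𝕜] (K' →L[𝕜] K')}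
  {ρ : A →⋆ₙₐ[𝕜] (L →L[𝕜] L)} {V₀ : H →L[𝕜] L} {V V₁ V₂ : H →L[𝕜] K} {V' V₂' V₃' : H →L[𝕜] K'}

/-- The relation of `IsStinespring` for operator-valued functions on an algebra with a star
operation, which need have neither a unit nor a norm, and over real as well as complex scalars. -/
def IsDilation (T : A → H →L[𝕜] H) (π : A →⋆ₙₐ[𝕜] (K →L[𝕜] K)) (V : H →L[𝕜] K) : Prop :=
  ∀ a, T a = adjoint V ∘L π a ∘L V

theorem isDilation_iff_inner :
    IsDilation T π V ↔ ∀ a h k, ⟪h, T a k⟫_𝕜 = ⟪V h, π a (V k)⟫_𝕜 := by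
  refine ⟨fun hV a h k ↦ ?_, fun hV a ↦ ext fun k ↦ ext_inner_left 𝕜 fun h ↦ ?_⟩
  · rw [hV a, comp_apply, adjoint_inner_right, comp_apply]
  · rw [hV, comp_apply, adjoint_inner_right, comp_apply]

namespace IsDilation

theorem starProjection_essentialSubspace_comp (hV : IsDilation T π V) :
    IsDilation T π ((essentialSubspace π).starProjection ∘L V) := by
  refine isDilation_iff_inner.mpr fun a h k ↦ ?_
  simp only [isDilation_iff_inner.mp hV, comp_apply,
    apply_starProjection_essentialSubspace, inner_starProjection_left_eq_right,
    starProjection_eq_self_iff.mpr (apply_mem_essentialSubspace π a (V k))]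

theorem isometryProd_comp (hV : IsDilation T ρ V₀) {S : L →L[𝕜] K} {R : L →L[𝕜] K'}
    (h_iso : ∀ x, ‖S x‖ ^ 2 + ‖R x‖ ^ 2 = ‖x‖ ^ 2)
    (hS : ∀ a x, S (ρ a x) = π a (S x)) (hR : ∀ a x, R (ρ a x) = π' a (R x)) :
    IsDilation T (directSumRepresentation π π')
      ((isometryProd S R h_iso).toContinuousLinearMap ∘L V₀) := by
  refine isDilation_iff_inner.mpr fun a h k ↦ ?_
  have h_intertwines (x : L) :
      directSumRepresentation π π' a (isometryProd S R h_iso x) =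
        isometryProd S R h_iso (ρ a x) := by
    simp only [isometryProd_apply, directSumRepresentation_apply_toLp, hS, hR]
  simp only [isDilation_iff_inner.mp hV, comp_apply,
    LinearIsometry.coe_toContinuousLinearMap, h_intertwines, LinearIsometry.inner_map_map]

theorem inner_apply_apply (hV : IsDilation T π V) (a b : A) (h k : H) :
    ⟪π a (V h), π b (V k)⟫_𝕜 = ⟪h, T (star a * b) k⟫_𝕜 := by
  rw [isDilation_iff_inner.mp hV, inner_representation_left, map_mul,
    mul_apply_eq_comp]

theorem gram_eq (hV : IsDilation T π V) (hV' : IsDilation T π' V') :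
    Matrix.gram 𝕜 (fun p : A × H ↦ π p.1 (V p.2)) =
      Matrix.gram 𝕜 (fun p : A × H ↦ π' p.1 (V' p.2)) := by
  ext p q
  simp only [Matrix.gram_apply, hV.inner_apply_apply, hV'.inner_apply_apply]

theorem exists_intertwiner (hV : IsDilation T π V) (hV' : IsDilation T π' V') :
    ∃ w : K' →L[𝕜] K, (∀ a h, w (π' a (V' h)) = π a (V h)) ∧
      (∀ a x, w (π' a x) = π a (w x)) ∧
      ∀ x, ‖w x‖ = ‖(cyclicSubspace π' V').starProjection x‖ := by
  obtain ⟨w, hw, hw_norm⟩ := exists_partialIsometry_of_gram_eq (hV'.gram_eq hV)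
  have hw_cyclic (a : A) : Set.EqOn (w ∘L π' a) (π a ∘L w) (cyclicSubspace π' V') := by
    refine eqOn_closure_span ?_
    rintro _ ⟨⟨b, h⟩, rfl⟩
    simpa [hw (b, h)] using hw (a * b, h)
  refine ⟨w, fun a h ↦ hw (a, h), fun a x ↦ ?_, hw_norm⟩
  set P := (cyclicSubspace π' V').starProjection
  calc w (π' a x) = w (P (π' a x)) := (apply_starProjection_of_norm_eq hw_norm _).symm
    _ = w (π' a (P x)) :=
      congr(w ($((commute_starProjection_cyclicSubspace π' V' a).eq) x))
    _ = π a (w (P x)) := hw_cyclic a (starProjection_apply_mem _ x)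
    _ = π a (w x) := by rw [apply_starProjection_of_norm_eq hw_norm]

end IsDilation

theorem exists_isDilation_directSum_norm_sub_le
    (hV₁ : IsDilation T₁ π V₁) (hV₂ : IsDilation T₂ π V₂)
    (hV₂' : IsDilation T₂ π' V₂') (hV₃' : IsDilation T₃ π' V₃')
    (h_ess : ∀ h, V₂ h ∈ essentialSubspace π) (h_ess' : ∀ h, V₂' h ∈ essentialSubspace π') :
    ∃ W₁ W₃ : H →L[𝕜] WithLp 2 (K × K'), IsDilation T₁ (directSumRepresentation π π') W₁ ∧
      IsDilation T₃ (directSumRepresentation π π') W₃ ∧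
      ‖W₁ - W₃‖ ≤ ‖V₁ - V₂‖ + ‖V₂' - V₃'‖ := by
  obtain ⟨w, hw, hw_rep, hw_norm⟩ := hV₂.exists_intertwiner hV₂'
  set M := cyclicSubspace π' V₂'
  have hM_commute (a : A) : Commute Mᗮ.starProjection (π' a) := by
    rw [starProjection_orthogonal']
    exact (Commute.one_left _).sub_left (commute_starProjection_cyclicSubspace π' V₂' a)
  let I : K →ₗᵢ[𝕜] WithLp 2 (K × K') := isometryProd (.id 𝕜 K) 0 (by simp)
  let J : K' →ₗᵢ[𝕜] WithLp 2 (K × K') := isometryProd w Mᗮ.starProjection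
    fun x ↦ by rw [hw_norm, ← norm_sq_eq_add_norm_sq_starProjection]
  have hIJ : I.toContinuousLinearMap ∘L V₂ = J.toContinuousLinearMap ∘L V₂' := by
    ext h : 1
    have h_perp : Mᗮ.starProjection (V₂' h) = 0 := starProjection_orthogonal_apply_eq_zero
      (mem_cyclicSubspace_of_mem_essentialSubspace (h_ess' h))
    simp [I, J, isometryProd_apply, h_perp,
      apply_eq_of_intertwines hw hw_rep (h_ess h) (h_ess' h)]
  refine ⟨I.toContinuousLinearMap ∘L V₁, J.toContinuousLinearMap ∘L V₃',
    hV₁.isometryProd_comp _ (by simp) (by simp),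
    hV₃'.isometryProd_comp _ hw_rep fun a x ↦ congr($((hM_commute a).eq) x), ?_⟩
  calc ‖I.toContinuousLinearMap ∘L V₁ - J.toContinuousLinearMap ∘L V₃'‖
      ≤ ‖I.toContinuousLinearMap ∘L V₁ - I.toContinuousLinearMap ∘L V₂‖ +
          ‖J.toContinuousLinearMap ∘L V₂' - J.toContinuousLinearMap ∘L V₃'‖ :=
        hIJ ▸ norm_sub_le_norm_sub_add_norm_sub _ _ _
    _ = ‖V₁ - V₂‖ + ‖V₂' - V₃'‖ := by
        simp only [← comp_sub, LinearIsometry.norm_toContinuousLinearMap_comp]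

end Dilation

theorem stmt14_general {𝕜 : Type*} [RCLike 𝕜]
    {A : Type u} [NonUnitalNonAssocSemiring A] [DistribMulAction 𝕜 A] [Star A]
    {H : Type v} [NormedAddCommGroup H] [InnerProductSpace 𝕜 H] [CompleteSpace H]
    {K : Type w} [NormedAddCommGroup K] [InnerProductSpace 𝕜 K] [CompleteSpace K]
    {K' : Type w'} [NormedAddCommGroup K'] [InnerProductSpace 𝕜 K'] [CompleteSpace K']
    {T₁ T₂ T₃ : A → H →L[𝕜] H}
    {π : A →⋆ₙₐ[𝕜] (K →L[𝕜] K)} {V₁ V₂ : H →L[𝕜] K}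
    (hV₁ : IsDilation T₁ π V₁) (hV₂ : IsDilation T₂ π V₂)
    {π' : A →⋆ₙₐ[𝕜] (K' →L[𝕜] K')} {V₂' V₃' : H →L[𝕜] K'}
    (hV₂' : IsDilation T₂ π' V₂') (hV₃' : IsDilation T₃ π' V₃') :
    ∃ (L : Type (max w w')) (_ : NormedAddCommGroup L) (_ : InnerProductSpace 𝕜 L)
      (_ : CompleteSpace L) (ρ : A →⋆ₙₐ[𝕜] (L →L[𝕜] L)) (W₁ W₃ : H →L[𝕜] L),
      IsDilation T₁ ρ W₁ ∧ IsDilation T₃ ρ W₃ ∧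
      ‖W₁ - W₃‖ ≤ ‖V₁ - V₂‖ + ‖V₂' - V₃'‖ := by
  obtain ⟨W₁, W₃, hW₁, hW₃, h_norm⟩ := exists_isDilation_directSum_norm_sub_le
    hV₁.starProjection_essentialSubspace_comp hV₂.starProjection_essentialSubspace_comp
    hV₂'.starProjection_essentialSubspace_comp hV₃'.starProjection_essentialSubspace_comp
    (fun h ↦ starProjection_apply_mem _ (V₂ h)) fun h ↦ starProjection_apply_mem _ (V₂' h)
  exact ⟨WithLp 2 (K × K'), inferInstance, inferInstance, inferInstance,
    directSumRepresentation π π', W₁, W₃, hW₁, hW₃, h_norm.trans <| add_le_add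
      (norm_starProjection_comp_sub_le _ V₁ V₂) (norm_starProjection_comp_sub_le _ V₂' V₃')⟩

theorem stmt14 {A : Type u} [CStarAlgebra A]
    {H : Type v} [NormedAddCommGroup H] [InnerProductSpace ℂ H] [CompleteSpace H]
    {K : Type w} [NormedAddCommGroup K] [InnerProductSpace ℂ K] [CompleteSpace K]
    {K' : Type w'} [NormedAddCommGroup K'] [InnerProductSpace ℂ K'] [CompleteSpace K']
    (T₁ T₂ T₃ : A →ₗ[ℂ] (H →L[ℂ] H))
    (hT₁ : IsCPMap T₁) (hT₂ : IsCPMap T₂) (hT₃ : IsCPMap T₃)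
    -- a common dilation of `(T₁, T₂)`
    (π : A →⋆ₙₐ[ℂ] (K →L[ℂ] K)) (V₁ V₂ : H →L[ℂ] K)
    (hV₁ : IsStinespring T₁ π V₁) (hV₂ : IsStinespring T₂ π V₂)
    -- a common dilation of `(T₂, T₃)`
    (π' : A →⋆ₙₐ[ℂ] (K' →L[ℂ] K')) (V₂' V₃' : H →L[ℂ] K')
    (hV₂' : IsStinespring T₂ π' V₂') (hV₃' : IsStinespring T₃ π' V₃') :
    ∃ (L : Type (max w w')) (_ : NormedAddCommGroup L) (_ : InnerProductSpace ℂ L)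
      (_ : CompleteSpace L) (ρ : A →⋆ₙₐ[ℂ] (L →L[ℂ] L)) (W₁ W₃ : H →L[ℂ] L),
      IsStinespring T₁ ρ W₁ ∧ IsStinespring T₃ ρ W₃ ∧
      ‖W₁ - W₃‖ ≤ ‖V₁ - V₂‖ + ‖V₂' - V₃'‖ :=
  stmt14_general hV₁ hV₂ hV₂' hV₃'
end
end
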